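/- arXiv:2510.26088 — 2 statements merged into one kernel-verified Lean document; each statement's English description precedes it below -/
import Mathlib

section
/- Let (s₀,φ) ∈ W with φ ∈ C¹(0,s₀) and ∂_x φ ≤ 0 on (0,s₀). For λ > 0 let (s_λ,u_λ) be the solution of problem (P) with initial data (s₀,λφ). Then for every λ > 0 for which (s_λ,u_λ) is a global-in-time solution with lim_{t→∞} s_λ(t) = ∞, one has liminf_{t→∞} t^{−(p−1)/(2p−1)} s_λ(t) > 0. -/
open Set MeasureTheory Filter Topology Real
open scoped ENNReal

noncomputable section

/-- `(s₀, φ)` belongs to the class `W`: `s₀ ∈ (0,∞)`, `φ` is Lipschitz on `[0,s₀]`,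
not identically zero, nonnegative there, and vanishes at `s₀`. -/
def memW (s₀ : ℝ) (φ : ℝ → ℝ) : Prop :=
  0 < s₀ ∧ (∃ K : NNReal, LipschitzOnWith K φ (Icc 0 s₀)) ∧
    (∃ x ∈ Icc 0 s₀, φ x ≠ 0) ∧ (∀ x ∈ Icc 0 s₀, 0 ≤ φ x) ∧ φ s₀ = 0

/-- `(s,u)` is a solution of the one-phase Stefan problem (P) on `(0,T]` (finite `T`)
with exponent `p` and initial data `(s₀,φ)`. -/
structure IsSolOn (p s₀ : ℝ) (φ : ℝ → ℝ) (T : ℝ) (s : ℝ → ℝ) (u : ℝ → ℝ → ℝ) : Prop where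
  T_pos : 0 < T
  s_cont : ContinuousOn s (Icc 0 T)
  s_diff : ∀ t ∈ Ioc 0 T, DifferentiableAt ℝ s t
  s_deriv_cont : ContinuousOn (deriv s) (Ioc 0 T)
  s_pos : ∀ t ∈ Icc 0 T, 0 < s t
  ut_diff : ∀ t ∈ Ioc 0 T, ∀ x ∈ Ioo 0 (s t), DifferentiableAt ℝ (fun τ => u τ x) t
  ux_diff : ∀ t ∈ Ioc 0 T, ∀ x ∈ Ioo 0 (s t), DifferentiableAt ℝ (u t) x
  uxx_diff : ∀ t ∈ Ioc 0 T, ∀ x ∈ Ioo 0 (s t), DifferentiableAt ℝ (deriv (u t)) x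
  ut_cont : ContinuousOn (fun q : ℝ × ℝ => deriv (fun τ => u τ q.2) q.1)
      {q : ℝ × ℝ | q.1 ∈ Ioc 0 T ∧ q.2 ∈ Ioo 0 (s q.1)}
  uxx_cont : ContinuousOn (fun q : ℝ × ℝ => deriv (deriv (u q.1)) q.2)
      {q : ℝ × ℝ | q.1 ∈ Ioc 0 T ∧ q.2 ∈ Ioo 0 (s q.1)}
  ux_cont : ContinuousOn (fun q : ℝ × ℝ => deriv (u q.1) q.2)
      {q : ℝ × ℝ | q.1 ∈ Ioc 0 T ∧ q.2 ∈ Icc 0 (s q.1)}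
  u_cont : ContinuousOn (fun q : ℝ × ℝ => u q.1 q.2)
      {q : ℝ × ℝ | q.1 ∈ Icc 0 T ∧ q.2 ∈ Icc 0 (s q.1)}
  u_nonneg : ∀ t ∈ Icc 0 T, ∀ x ∈ Icc 0 (s t), 0 ≤ u t x
  heat : ∀ t ∈ Ioc 0 T, ∀ x ∈ Ioo 0 (s t),
      deriv (fun τ => u τ x) t = deriv (deriv (u t)) x
  bc_zero : ∀ t ∈ Ioc 0 T, -deriv (u t) 0 = u t 0 ^ p
  bc_free : ∀ t ∈ Ioc 0 T, u t (s t) = 0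
  stefan : ∀ t ∈ Ioc 0 T, deriv s t = -deriv (u t) (s t)
  init : ∀ x ∈ Icc 0 s₀, u 0 x = φ x
  init_s : s 0 = s₀

/-- `(s,u)` is a global-in-time solution of problem (P). -/
def IsGlobalSol (p s₀ : ℝ) (φ : ℝ → ℝ) (s : ℝ → ℝ) (u : ℝ → ℝ → ℝ) : Prop :=
  ∀ T : ℝ, 0 < T → IsSolOn p s₀ φ T s u

/-- `Tm ∈ (0,∞]` is the maximal existence time of the solution `(s,u)` of (P) with
initial data `(s₀,φ)`: the solution exists on `(0,T]` for every `T < Tm`, and for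
`T > Tm` problem (P) admits no solution on `(0,T]`. -/
def IsMaxSol (p s₀ : ℝ) (φ : ℝ → ℝ) (Tm : ℝ≥0∞) (s : ℝ → ℝ) (u : ℝ → ℝ → ℝ) : Prop :=
  0 < Tm ∧
    (∀ T : ℝ, 0 < T → ENNReal.ofReal T < Tm → IsSolOn p s₀ φ T s u) ∧
    (∀ T : ℝ, Tm < ENNReal.ofReal T → ¬∃ σ v, IsSolOn p s₀ φ T σ v)

/-- The sup norm `‖u(t)‖_{L^∞(0,s(t))}`. -/
def supNorm (s : ℝ → ℝ) (u : ℝ → ℝ → ℝ) (t : ℝ) : ℝ :=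
  sSup (u t '' Ioo 0 (s t))

/-- The `L¹` norm `‖u(t)‖_{L¹(0,s(t))}` of the nonnegative function `u(t,·)`. -/
def L1Norm (s : ℝ → ℝ) (u : ℝ → ℝ → ℝ) (t : ℝ) : ℝ :=
  ∫ x in (0:ℝ)..(s t), u t x

/-- The energy `E(s(t),u(t))`. -/
def energy (p : ℝ) (s : ℝ → ℝ) (u : ℝ → ℝ → ℝ) (t : ℝ) : ℝ :=
  1 / 2 * (∫ x in (0:ℝ)..(s t), (deriv (u t) x) ^ 2) - u t 0 ^ (p + 1) / (p + 1)

/-!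
The solution is compared with explicit quadratic profiles `A(t) (1 - x/σ(t)) (1 + κ x/σ(t))`.

Since `φ` is nonincreasing, so is every slice `u(t, ·)`: a negative minimum of
`u(t,x) - u(t,y) + ε exp(2t - x)` over `0 ≤ x ≤ y ≤ s(t)` is impossible. Hence `u(t,0)` bounds
`u(t,·)`. If `u(t₀,0)` were below a small multiple of `s(t₀)^(-1/(p-1))`, then a concave
supersolution, slowly decaying on an interval growing from `2 s(t₀)` to `4 s(t₀)`, would keep
`s < 4 s(t₀)` forever, which contradicts `s → ∞`. So `u(t,0) ≥ c s(t)^(-1/(p-1))` for all large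
`t`. On `[T/2, T]` this is at least `b := c s(T)^(-1/(p-1))`, because `s` is nondecreasing, and a
convex subsolution with temperature `b` at `x = 0` and boundary `σ` satisfying `σ σ' = b/4` gives
`s(T)² ≥ c' b T`. Thus `s(T)^(2 + 1/(p-1)) ≥ c'' T`, and `2 + 1/(p-1) = (2p-1)/(p-1)`.
-/

/-! ### Derivative tests at one-sided and interior minima -/

lemma nonpos_of_isLocalMinOn_Iic {f : ℝ → ℝ} {m a : ℝ} (hmin : IsLocalMinOn f (Iic a) a)
    (hf : HasDerivWithinAt f m (Iic a) a) : m ≤ 0 := by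
  have hcone : (-1 : ℝ) ∈ posTangentConeAt (Iic a) a := by
    refine mem_posTangentConeAt_of_segment_subset ((convex_Iic a).segment_subset ?_ ?_) <;> simp
  simpa using hmin.hasFDerivWithinAt_nonneg hf.hasFDerivWithinAt hcone

lemma nonneg_of_isLocalMinOn_Ici {f : ℝ → ℝ} {m a : ℝ} (hmin : IsLocalMinOn f (Ici a) a)
    (hf : HasDerivWithinAt f m (Ici a) a) : 0 ≤ m := by
  have hcone : (1 : ℝ) ∈ posTangentConeAt (Ici a) a := by
    refine mem_posTangentConeAt_of_segment_subset ((convex_Ici a).segment_subset ?_ ?_) <;> simp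
  simpa using hmin.hasFDerivWithinAt_nonneg hf.hasFDerivWithinAt hcone

lemma second_deriv_nonneg_of_isLocalMin {f f' : ℝ → ℝ} {a c : ℝ} (hmin : IsLocalMin f a)
    (hf : ∀ᶠ x in 𝓝 a, HasDerivAt f (f' x) x) (hf' : HasDerivAt f' c a) : 0 ≤ c := by
  have hderiv : deriv f =ᶠ[𝓝 a] f' := hf.mono fun _ hx => hx.deriv
  have hsecond : deriv (deriv f) a = c := hderiv.deriv_eq.trans hf'.deriv
  by_contra! hneg
  have hmax : IsLocalMax f a := isLocalMax_of_deriv_deriv_neg (hsecond.trans_lt hneg)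
    hmin.deriv_eq_zero hf.self_of_nhds.continuousAt
  have hconst : f =ᶠ[𝓝 a] fun _ => f a := by
    filter_upwards [hmin, hmax] with x hx hx' using le_antisymm hx' hx
  have hzero : deriv (deriv f) a = 0 := by simpa using hconst.deriv.deriv_eq
  linarith

section Touching

variable {f₁ f₂ : ℝ → ℝ} {a b m₁ m₂ : ℝ}

lemma slope_le_of_touch_left (hab : a < b) (hle : ∀ x ∈ Icc a b, f₁ x ≤ f₂ x)
    (heq : f₁ a = f₂ a) (h₁ : HasDerivWithinAt f₁ m₁ (Ici a) a)
    (h₂ : HasDerivWithinAt f₂ m₂ (Ici a) a) : m₁ ≤ m₂ := by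
  refine sub_nonneg.1 (nonneg_of_isLocalMinOn_Ici ?_ (h₂.sub h₁))
  filter_upwards [Icc_mem_nhdsGE hab] with x hx
  simpa [heq] using hle x hx

lemma slope_le_of_touch_right (hab : a < b) (hle : ∀ x ∈ Icc a b, f₁ x ≤ f₂ x)
    (heq : f₁ b = f₂ b) (h₁ : HasDerivWithinAt f₁ m₁ (Iic b) b)
    (h₂ : HasDerivWithinAt f₂ m₂ (Iic b) b) : m₂ ≤ m₁ := by
  refine sub_nonpos.1 (nonpos_of_isLocalMinOn_Iic ?_ (h₂.sub h₁))
  filter_upwards [Icc_mem_nhdsLE hab] with x hx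
  simpa [heq] using hle x hx

end Touching

/-! ### A minimum principle on moving domains -/

/-- The closed space-time region `⋃_{t ∈ I} {t} × [0, ρ(t)]`. -/
def movingDomain (I : Set ℝ) (ρ : ℝ → ℝ) : Set (ℝ × ℝ) :=
  {q | q.1 ∈ I ∧ q.2 ∈ Icc 0 (ρ q.1)}

/-- The function `g` has one time derivative and two space derivatives at `(t, x)`, and
`∂ₜg - ∂ₓ²g = r` there. Positive residuals describe supersolutions of the heat equation, negative
ones subsolutions. -/
def HasHeatResidualAt (g : ℝ → ℝ → ℝ) (r t x : ℝ) : Prop :=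
  ∃ (gx : ℝ → ℝ) (gxx : ℝ), HasDerivAt (fun τ => g τ x) (gxx + r) t ∧
    (∀ᶠ y in 𝓝 x, HasDerivAt (g t) (gx y) y) ∧ HasDerivAt gx gxx x

lemma HasHeatResidualAt.sub {g₁ g₂ : ℝ → ℝ → ℝ} {r₁ r₂ t x : ℝ}
    (h₁ : HasHeatResidualAt g₁ r₁ t x) (h₂ : HasHeatResidualAt g₂ r₂ t x) :
    HasHeatResidualAt (fun τ y => g₁ τ y - g₂ τ y) (r₁ - r₂) t x := by
  obtain ⟨gx₁, gxx₁, ht₁, hx₁, hxx₁⟩ := h₁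
  obtain ⟨gx₂, gxx₂, ht₂, hx₂, hxx₂⟩ := h₂
  refine ⟨fun y => gx₁ y - gx₂ y, gxx₁ - gxx₂, (ht₁.sub ht₂).congr_deriv (by ring), ?_,
    hxx₁.sub hxx₂⟩
  filter_upwards [hx₁, hx₂] with y hy₁ hy₂ using hy₁.sub hy₂

lemma HasHeatResidualAt.nonpos_of_isLocalMin {g : ℝ → ℝ → ℝ} {r t x : ℝ}
    (h : HasHeatResidualAt g r t x) (htime : IsLocalMinOn (fun τ => g τ x) (Iic t) t)
    (hspace : IsLocalMin (g t) x) : r ≤ 0 := by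
  obtain ⟨gx, gxx, ht, hx, hxx⟩ := h
  have hgt : gxx + r ≤ 0 := nonpos_of_isLocalMinOn_Iic htime ht.hasDerivWithinAt
  have hgxx : 0 ≤ gxx := second_deriv_nonneg_of_isLocalMin hspace hx hxx
  linarith

lemma isCompact_movingDomain {ρ : ℝ → ℝ} {t₀ T : ℝ} (hρ : ContinuousOn ρ (Icc t₀ T)) :
    IsCompact (movingDomain (Icc t₀ T) ρ) := by
  obtain ⟨R, hR⟩ := isCompact_Icc.bddAbove_image hρ
  have hclosed : IsClosed {q ∈ Icc t₀ T ×ˢ Ici (0 : ℝ) | q.2 ≤ ρ q.1} :=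
    (isClosed_Icc.prod isClosed_Ici).isClosed_le (by fun_prop)
      (hρ.comp (by fun_prop) fun q hq => hq.1)
  have heq : movingDomain (Icc t₀ T) ρ = {q ∈ Icc t₀ T ×ˢ Ici (0 : ℝ) | q.2 ≤ ρ q.1} := by
    ext q
    simp only [movingDomain, mem_ofPred_eq, mem_prod, mem_Icc, mem_Ici, and_assoc]
  rw [heq]
  refine (isCompact_Icc.prod isCompact_Icc).of_isClosed_subset (s := Icc t₀ T ×ˢ Icc 0 R)
    hclosed ?_
  rintro q ⟨⟨hq₁, hq₂⟩, hq⟩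
  exact ⟨hq₁, hq₂, hq.trans (hR (mem_image_of_mem ρ hq₁))⟩

lemma exists_first_nonpos {X : Type*} [TopologicalSpace X] [T2Space X] {K : Set X}
    (hK : IsCompact K) {τ g : X → ℝ} (hτ : ContinuousOn τ K) (hg : ContinuousOn g K)
    (hne : ∃ q ∈ K, g q ≤ 0) :
    ∃ q ∈ K, g q ≤ 0 ∧ ∀ q' ∈ K, τ q' < τ q → 0 < g q' := by
  have hcompact : IsCompact (K ∩ g ⁻¹' Iic 0) :=
    hK.of_isClosed_subset (hg.preimage_isClosed_of_isClosed hK.isClosed isClosed_Iic)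
      inter_subset_left
  obtain ⟨q, ⟨hqK, hq⟩, hmin⟩ := hcompact.exists_isMinOn hne (hτ.mono inter_subset_left)
  refine ⟨q, hqK, hq, fun q' hq'K hlt => ?_⟩
  by_contra! hq'
  exact hlt.not_ge (hmin ⟨hq'K, hq'⟩)

lemma le_of_forall_Ico_le {f₁ f₂ : ℝ → ℝ} {t₀ T t : ℝ} (h₁ : ContinuousOn f₁ (Icc t₀ T))
    (h₂ : ContinuousOn f₂ (Icc t₀ T)) (ht : t ∈ Ioc t₀ T) (hle : ∀ τ ∈ Ico t₀ t, f₁ τ ≤ f₂ τ) :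
    f₁ t ≤ f₂ t := by
  have hsub : Ico t₀ t ⊆ Icc t₀ T := fun τ hτ => ⟨hτ.1, hτ.2.le.trans ht.2⟩
  have hclosure : t ∈ closure (Ico t₀ t) := by
    rw [closure_Ico ht.1.ne]
    exact right_mem_Icc.2 ht.1.le
  have htmem := Ioc_subset_Icc_self ht
  exact ((h₁ t htmem).mono hsub).closure_le hclosure ((h₂ t htmem).mono hsub) hle

section MinimumPrinciple

variable {ρ : ℝ → ℝ} {g : ℝ → ℝ → ℝ} {t₀ T t : ℝ}

lemma nonneg_slice_of_pos_before (hρ : ContinuousOn ρ (Icc t₀ T))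
    (hρ_pos : ∀ t ∈ Icc t₀ T, 0 < ρ t)
    (hg : ContinuousOn (Function.uncurry g) (movingDomain (Icc t₀ T) ρ)) (ht : t ∈ Ioc t₀ T)
    (hbefore : ∀ τ ∈ Ico t₀ t, ∀ x ∈ Icc 0 (ρ τ), 0 < g τ x) :
    ∀ x ∈ Icc 0 (ρ t), 0 ≤ g t x := by
  intro x hx
  -- Approach `(t, x)` from the past along `τ ↦ (τ, min x (ρ τ))`, which stays in the domain.
  have hpath : ContinuousOn (fun τ => g τ (min x (ρ τ))) (Icc t₀ T) :=
    hg.comp (f := fun τ => (τ, min x (ρ τ))) (by fun_prop)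
      fun τ hτ => ⟨hτ, le_min hx.1 (hρ_pos τ hτ).le, min_le_right _ _⟩
  have hlimit : 0 ≤ g t (min x (ρ t)) :=
    le_of_forall_Ico_le (f₂ := fun τ => g τ (min x (ρ τ))) continuousOn_const hpath ht fun τ hτ =>
      (hbefore τ hτ _ ⟨le_min hx.1 (hρ_pos τ ⟨hτ.1, hτ.2.le.trans ht.2⟩).le, min_le_right _ _⟩).le
  rwa [min_eq_left hx.2] at hlimit

lemma heat_residual_nonpos_of_first_zero {x r : ℝ} (hρ : ContinuousOn ρ (Icc t₀ T))
    (ht : t ∈ Ioc t₀ T) (hx : x ∈ Ioo 0 (ρ t)) (hzero : g t x = 0)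
    (hbefore : ∀ τ ∈ Ico t₀ t, ∀ x ∈ Icc 0 (ρ τ), 0 < g τ x)
    (hslice : ∀ x ∈ Icc 0 (ρ t), 0 ≤ g t x) (hr : HasHeatResidualAt g r t x) : r ≤ 0 := by
  have hρt : ContinuousWithinAt ρ (Iic t) t :=
    (hρ t (Ioc_subset_Icc_self ht)).mono_of_mem_nhdsWithin (Icc_mem_nhdsLE_of_mem ht)
  refine hr.nonpos_of_isLocalMin ?_ ?_
  · filter_upwards [hρt.eventually_const_lt hx.2, Ioc_mem_nhdsLE ht.1] with τ hτ hτ'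
    rcases hτ'.2.eq_or_lt with rfl | hlt
    · rfl
    · exact hzero.trans_le (hbefore τ ⟨hτ'.1.le, hlt⟩ x ⟨hx.1.le, hτ.le⟩).le
  · filter_upwards [Icc_mem_nhds hx.1 hx.2] with y hy
    exact hzero.trans_le (hslice y hy)

theorem pos_of_heat_residual_pos (hρ : ContinuousOn ρ (Icc t₀ T))
    (hρ_pos : ∀ t ∈ Icc t₀ T, 0 < ρ t)
    (hg : ContinuousOn (Function.uncurry g) (movingDomain (Icc t₀ T) ρ))
    (hinit : ∀ x ∈ Icc 0 (ρ t₀), 0 < g t₀ x)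
    (hlateral : ∀ t ∈ Ioc t₀ T, (∀ τ ∈ Ico t₀ t, ∀ x ∈ Icc 0 (ρ τ), 0 < g τ x) →
      (∀ x ∈ Icc 0 (ρ t), 0 ≤ g t x) → g t 0 ≠ 0 ∧ g t (ρ t) ≠ 0)
    (hheat : ∀ t ∈ Ioc t₀ T, ∀ x ∈ Ioo 0 (ρ t), ∃ r > 0, HasHeatResidualAt g r t x) :
    ∀ t ∈ Icc t₀ T, ∀ x ∈ Icc 0 (ρ t), 0 < g t x := by
  by_contra! hne
  obtain ⟨t', ht', x', hx', hneg⟩ := hne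
  obtain ⟨⟨t, x⟩, ⟨ht, hx⟩, hle, hfirst⟩ :=
    exists_first_nonpos (isCompact_movingDomain hρ) continuous_fst.continuousOn hg
      ⟨(t', x'), ⟨ht', hx'⟩, hneg⟩
  have hbefore : ∀ τ ∈ Ico t₀ t, ∀ y ∈ Icc 0 (ρ τ), 0 < g τ y := fun τ hτ y hy =>
    hfirst (τ, y) ⟨⟨hτ.1, hτ.2.le.trans ht.2⟩, hy⟩ hτ.2
  have ht₀ : t₀ ≠ t := by
    rintro rfl
    exact (hinit x hx).not_ge hle
  have ht : t ∈ Ioc t₀ T := ⟨ht.1.lt_of_ne ht₀, ht.2⟩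
  have hslice := nonneg_slice_of_pos_before hρ hρ_pos hg ht hbefore
  have hzero : g t x = 0 := le_antisymm hle (hslice x hx)
  obtain ⟨hleft, hright⟩ := hlateral t ht hbefore hslice
  have hx : x ∈ Ioo 0 (ρ t) :=
    ⟨hx.1.lt_of_ne fun h => hleft (h ▸ hzero), hx.2.lt_of_ne fun h => hright (h ▸ hzero)⟩
  obtain ⟨r, hr_pos, hr⟩ := hheat t ht x hx
  exact hr_pos.not_ge (heat_residual_nonpos_of_first_zero hρ ht hx hzero hbefore hslice hr)

end MinimumPrinciple

/-! ### Comparison of fronts -/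

/-- The Stefan condition `s'(t) + ∂ₓu(t, s(t)) = r` with residual `r`, where the space derivative
is taken from inside the domain. -/
def HasStefanResidualAt (s : ℝ → ℝ) (u : ℝ → ℝ → ℝ) (r t : ℝ) : Prop :=
  ∃ m, HasDerivAt s (r - m) t ∧ HasDerivWithinAt (u t) m (Iic (s t)) (s t)

/-- A continuous nonnegative temperature `u` on the region `0 ≤ x ≤ s(t)`, `t₀ ≤ t ≤ T`, behind a
moving boundary `s` at which it vanishes. No equation is imposed, so that solutions of the Stefan
problem and barriers are covered alike. -/
structure IsFront (t₀ T : ℝ) (s : ℝ → ℝ) (u : ℝ → ℝ → ℝ) : Prop where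
  continuousOn_boundary : ContinuousOn s (Icc t₀ T)
  boundary_pos : ∀ t ∈ Icc t₀ T, 0 < s t
  continuousOn : ContinuousOn (Function.uncurry u) (movingDomain (Icc t₀ T) s)
  nonneg : ∀ t ∈ Icc t₀ T, ∀ x ∈ Icc 0 (s t), 0 ≤ u t x
  eq_zero : ∀ t ∈ Icc t₀ T, u t (s t) = 0

lemma HasStefanResidualAt.le_of_contact {s₁ s₂ : ℝ → ℝ} {u₁ u₂ : ℝ → ℝ → ℝ} {t₀ t r₁ r₂ : ℝ}
    (h₁ : HasStefanResidualAt s₁ u₁ r₁ t) (h₂ : HasStefanResidualAt s₂ u₂ r₂ t) (ht : t₀ < t)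
    (hbefore : ∀ τ ∈ Ico t₀ t, s₁ τ < s₂ τ) (hs : s₁ t = s₂ t) (hs_pos : 0 < s₁ t)
    (hu : ∀ x ∈ Icc 0 (s₁ t), u₁ t x ≤ u₂ t x) (hu_zero : u₁ t (s₁ t) = u₂ t (s₁ t)) :
    r₂ ≤ r₁ := by
  obtain ⟨m₁, hs₁, hu₁⟩ := h₁
  obtain ⟨m₂, hs₂, hu₂⟩ := h₂
  rw [← hs] at hu₂
  have hspeed : (r₂ - m₂) - (r₁ - m₁) ≤ 0 := by
    refine nonpos_of_isLocalMinOn_Iic ?_ (hs₂.sub hs₁).hasDerivWithinAt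
    filter_upwards [Ioc_mem_nhdsLE ht] with τ hτ
    rcases hτ.2.eq_or_lt with rfl | hlt
    · rfl
    · simpa [hs] using (hbefore τ ⟨hτ.1.le, hlt⟩).le
  have hslope : m₂ ≤ m₁ := slope_le_of_touch_right hs_pos hu hu_zero hu₁ hu₂
  linarith

section Comparison

variable {s₁ s₂ : ℝ → ℝ} {u₁ u₂ : ℝ → ℝ → ℝ} {t₀ T t : ℝ}

lemma IsFront.boundary_lt_of_lt (h₁ : IsFront t₀ T s₁ u₁) (h₂ : IsFront t₀ T s₂ u₂)
    (ht : t ∈ Icc t₀ T) (hu : ∀ x ∈ Icc 0 (min (s₁ t) (s₂ t)), u₁ t x < u₂ t x) :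
    s₁ t < s₂ t := by
  by_contra! hle
  have hs₂ := (h₂.boundary_pos t ht).le
  have hlt := hu (s₂ t) ⟨hs₂, le_min hle le_rfl⟩
  rw [h₂.eq_zero t ht] at hlt
  exact hlt.not_ge (h₁.nonneg t ht _ ⟨hs₂, hle⟩)

lemma IsFront.continuousOn_sub (h₁ : IsFront t₀ T s₁ u₁) (h₂ : IsFront t₀ T s₂ u₂) :
    ContinuousOn (Function.uncurry fun τ x => u₂ τ x - u₁ τ x)
      (movingDomain (Icc t₀ T) fun τ => min (s₁ τ) (s₂ τ)) :=
  (h₂.continuousOn.mono fun _ hq => ⟨hq.1, hq.2.1, hq.2.2.trans (min_le_right _ _)⟩).sub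
    (h₁.continuousOn.mono fun _ hq => ⟨hq.1, hq.2.1, hq.2.2.trans (min_le_left _ _)⟩)

theorem IsFront.boundary_lt (h₁ : IsFront t₀ T s₁ u₁) (h₂ : IsFront t₀ T s₂ u₂)
    (hinit : ∀ x ∈ Icc 0 (min (s₁ t₀) (s₂ t₀)), u₁ t₀ x < u₂ t₀ x)
    (hheat : ∀ t ∈ Ioc t₀ T, ∀ x, 0 < x → x < s₁ t → x < s₂ t →
      ∃ r₁ r₂, HasHeatResidualAt u₁ r₁ t x ∧ HasHeatResidualAt u₂ r₂ t x ∧ r₁ < r₂)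
    (hflux : ∀ t ∈ Ioc t₀ T, u₁ t 0 = u₂ t 0 →
      ∃ m₁ m₂, HasDerivWithinAt (u₁ t) m₁ (Ici 0) 0 ∧ HasDerivWithinAt (u₂ t) m₂ (Ici 0) 0 ∧
        m₂ < m₁)
    (hstefan : ∀ t ∈ Ioc t₀ T, s₁ t = s₂ t →
      ∃ r₁ r₂, HasStefanResidualAt s₁ u₁ r₁ t ∧ HasStefanResidualAt s₂ u₂ r₂ t ∧ r₁ < r₂)
    (htouch : ∀ t ∈ Ioc t₀ T, s₁ t < s₂ t → (∀ x ∈ Icc 0 (s₁ t), u₁ t x ≤ u₂ t x) →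
      u₂ t (s₁ t) ≠ 0) :
    ∀ t ∈ Icc t₀ T, s₁ t < s₂ t := by
  have hpos : ∀ t ∈ Icc t₀ T, ∀ x ∈ Icc 0 (min (s₁ t) (s₂ t)), 0 < u₂ t x - u₁ t x := by
    refine pos_of_heat_residual_pos
      (h₁.continuousOn_boundary.inf h₂.continuousOn_boundary)
      (fun t ht => lt_min (h₁.boundary_pos t ht) (h₂.boundary_pos t ht))
      (h₁.continuousOn_sub h₂) (fun x hx => sub_pos.2 (hinit x hx)) ?_ ?_
    · intro t ht hbefore hslice
      have htIcc := Ioc_subset_Icc_self ht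
      have hs_before : ∀ τ ∈ Ico t₀ t, s₁ τ < s₂ τ := fun τ hτ =>
        h₁.boundary_lt_of_lt h₂ ⟨hτ.1, hτ.2.le.trans ht.2⟩
          fun x hx => sub_pos.1 (hbefore τ hτ x hx)
      have hs : s₁ t ≤ s₂ t := le_of_forall_Ico_le h₁.continuousOn_boundary
        h₂.continuousOn_boundary ht fun τ hτ => (hs_before τ hτ).le
      have hs_pos := h₁.boundary_pos t htIcc
      rw [min_eq_left hs] at hslice ⊢
      have hle : ∀ x ∈ Icc 0 (s₁ t), u₁ t x ≤ u₂ t x := fun x hx => sub_nonneg.1 (hslice x hx)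
      refine ⟨fun hzero => ?_, fun hzero => ?_⟩
      · obtain ⟨m₁, m₂, hm₁, hm₂, hm⟩ := hflux t ht (sub_eq_zero.1 hzero).symm
        exact hm.not_ge
          (slope_le_of_touch_left hs_pos hle (sub_eq_zero.1 hzero).symm hm₁ hm₂)
      · rcases hs.lt_or_eq with hlt | heq
        · exact htouch t ht hlt hle
            (by rw [sub_eq_zero.1 hzero, h₁.eq_zero t htIcc])
        · obtain ⟨r₁, r₂, hr₁, hr₂, hr⟩ := hstefan t ht heq
          exact hr.not_ge (hr₁.le_of_contact hr₂ ht.1 hs_before heq hs_pos hle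
            (sub_eq_zero.1 hzero).symm)
    · intro t ht x hx
      obtain ⟨r₁, r₂, hr₁, hr₂, hr⟩ := hheat t ht x hx.1 (hx.2.trans_le (min_le_left _ _))
        (hx.2.trans_le (min_le_right _ _))
      exact ⟨r₂ - r₁, sub_pos.2 hr, hr₂.sub hr₁⟩
  exact fun t ht => h₁.boundary_lt_of_lt h₂ ht fun x hx => sub_pos.1 (hpos t ht x hx)

end Comparison

/-! ### Global solutions -/

namespace IsGlobalSol

variable {p s₀ : ℝ} {φ s : ℝ → ℝ} {u : ℝ → ℝ → ℝ} {t₀ T t x : ℝ}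

lemma boundary_pos (h : IsGlobalSol p s₀ φ s u) (ht : 0 < t) : 0 < s t :=
  (h t ht).s_pos t ⟨ht.le, le_rfl⟩

lemma nonneg (h : IsGlobalSol p s₀ φ s u) (ht : 0 < t) (hx : x ∈ Icc 0 (s t)) : 0 ≤ u t x :=
  (h t ht).u_nonneg t ⟨ht.le, le_rfl⟩ x hx

lemma isFront (h : IsGlobalSol p s₀ φ s u) (ht₀ : 0 < t₀) (hT : t₀ ≤ T) : IsFront t₀ T s u := by
  have hsol := h T (ht₀.trans_le hT)
  have hsub : Icc t₀ T ⊆ Icc 0 T := Icc_subset_Icc_left ht₀.le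
  exact
    { continuousOn_boundary := hsol.s_cont.mono hsub
      boundary_pos := fun t ht => hsol.s_pos t (hsub ht)
      continuousOn := hsol.u_cont.mono fun _ hq => ⟨hsub hq.1, hq.2⟩
      nonneg := fun t ht => hsol.u_nonneg t (hsub ht)
      eq_zero := fun t ht => hsol.bc_free t ⟨ht₀.trans_le ht.1, ht.2⟩ }

lemma hasHeatResidualAt (h : IsGlobalSol p s₀ φ s u) (ht : 0 < t) (hx : x ∈ Ioo 0 (s t)) :
    HasHeatResidualAt u 0 t x := by
  have hsol := h t ht
  have htmem : t ∈ Ioc 0 t := ⟨ht, le_rfl⟩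
  refine ⟨deriv (u t), deriv (deriv (u t)) x, ?_, ?_, (hsol.uxx_diff t htmem x hx).hasDerivAt⟩
  · rw [add_zero, ← hsol.heat t htmem x hx]
    exact (hsol.ut_diff t htmem x hx).hasDerivAt
  · filter_upwards [Ioo_mem_nhds hx.1 hx.2] with y hy
    exact (hsol.ux_diff t htmem y hy).hasDerivAt

lemma differentiableOn_slice (h : IsGlobalSol p s₀ φ s u) (ht : 0 < t) :
    DifferentiableOn ℝ (u t) (Ioo 0 (s t)) := fun x hx =>
  ((h t ht).ux_diff t ⟨ht, le_rfl⟩ x hx).differentiableWithinAt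

lemma continuousOn_slice (h : IsGlobalSol p s₀ φ s u) (ht : 0 < t) :
    ContinuousOn (u t) (Icc 0 (s t)) :=
  (h t ht).u_cont.comp (f := fun x => (t, x)) (by fun_prop) fun _ hx => ⟨⟨ht.le, le_rfl⟩, hx⟩

lemma continuousOn_deriv_slice (h : IsGlobalSol p s₀ φ s u) (ht : 0 < t) :
    ContinuousOn (deriv (u t)) (Icc 0 (s t)) :=
  (h t ht).ux_cont.comp (f := fun x => (t, x)) (by fun_prop) fun _ hx => ⟨⟨ht, le_rfl⟩, hx⟩

-- `deriv (u t) 0` is a two-sided derivative and may be a junk value; continuity of `∂ₓu` up to the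
-- boundary is what identifies it with the one-sided derivative.
lemma hasDerivWithinAt_left (h : IsGlobalSol p s₀ φ s u) (ht : 0 < t) :
    HasDerivWithinAt (u t) (-(u t 0 ^ p)) (Ici 0) 0 := by
  have hs := h.boundary_pos ht
  have hmem : (0 : ℝ) ∈ Icc 0 (s t) := left_mem_Icc.2 hs.le
  rw [← (h t ht).bc_zero t ⟨ht, le_rfl⟩, neg_neg]
  refine hasDerivWithinAt_Ici_of_tendsto_deriv (h.differentiableOn_slice ht)
    ((h.continuousOn_slice ht 0 hmem).mono Ioo_subset_Icc_self) (Ioo_mem_nhdsGT hs) ?_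
  rw [← nhdsWithin_Ioo_eq_nhdsGT hs]
  exact (h.continuousOn_deriv_slice ht 0 hmem).mono Ioo_subset_Icc_self

lemma hasStefanResidualAt (h : IsGlobalSol p s₀ φ s u) (ht : 0 < t) :
    HasStefanResidualAt s u 0 t := by
  have hs := h.boundary_pos ht
  have hmem : s t ∈ Icc 0 (s t) := right_mem_Icc.2 hs.le
  have htmem : t ∈ Ioc 0 t := ⟨ht, le_rfl⟩
  refine ⟨deriv (u t) (s t), ?_, ?_⟩
  · rw [zero_sub, ← (h t ht).stefan t htmem]
    exact ((h t ht).s_diff t htmem).hasDerivAt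
  · refine hasDerivWithinAt_Iic_of_tendsto_deriv (h.differentiableOn_slice ht)
      ((h.continuousOn_slice ht (s t) hmem).mono Ioo_subset_Icc_self) (Ioo_mem_nhdsLT hs) ?_
    rw [← nhdsWithin_Ioo_eq_nhdsLT hs]
    exact (h.continuousOn_deriv_slice ht (s t) hmem).mono Ioo_subset_Icc_self

lemma monotoneOn_boundary (h : IsGlobalSol p s₀ φ s u) : MonotoneOn s (Ioi 0) := by
  have hdiff : ∀ t > 0, DifferentiableAt ℝ s t := fun t ht => (h t ht).s_diff t ⟨ht, le_rfl⟩
  refine monotoneOn_of_deriv_nonneg (convex_Ioi 0)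
    (fun t ht => (hdiff t ht).continuousAt.continuousWithinAt) ?_ ?_
  · rw [interior_Ioi]
    exact fun t ht => (hdiff t ht).differentiableWithinAt
  · rw [interior_Ioi]
    intro t ht
    obtain ⟨m, hs, hu⟩ := h.hasStefanResidualAt ht
    have hslope : m ≤ 0 := slope_le_of_touch_right (h.boundary_pos ht)
      (fun x hx => h.nonneg ht hx) ((h t ht).bc_free t ⟨ht, le_rfl⟩).symm
      (hasDerivWithinAt_const _ _ 0) hu
    rw [hs.deriv]
    linarith

end IsGlobalSol

/-! ### Spatial monotonicity by doubling the space variable -/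

/-- The perturbed difference `u(t,x) - u(t,y) + ε exp(2t - x)`, whose nonnegativity for `x ≤ y` and
all `ε > 0` expresses that `u(t,·)` is nonincreasing. The perturbation is positive, strictly
decreasing in `x` and a strict supersolution of the heat equation. -/
def doubledGap (u : ℝ → ℝ → ℝ) (ε t x y : ℝ) : ℝ :=
  u t x - u t y + ε * exp (2 * t - x)

/-- The pairs of points of the space-time region `D` at the same time and ordered in space: the
domain on which `doubledGap` is minimized. -/
def orderedPairs (D : Set (ℝ × ℝ)) : Set ((ℝ × ℝ) × (ℝ × ℝ)) :=
  D ×ˢ D ∩ {z | z.1.1 = z.2.1 ∧ z.1.2 ≤ z.2.2}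

lemma isCompact_orderedPairs {D : Set (ℝ × ℝ)} (hD : IsCompact D) : IsCompact (orderedPairs D) :=
  (hD.prod hD).inter_right ((isClosed_eq continuous_fst.fst continuous_snd.fst).inter
    (isClosed_le continuous_fst.snd continuous_snd.snd))

lemma doubledGap_not_isLocalMin {u : ℝ → ℝ → ℝ} {ε t x y : ℝ} (hε : 0 < ε)
    (hux : HasHeatResidualAt u 0 t x) (huy : HasHeatResidualAt u 0 t y)
    (htime : IsLocalMinOn (fun τ => doubledGap u ε τ x y) (Iic t) t)
    (hspace : IsLocalMin (fun x' => doubledGap u ε t x' y) x) :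
    ¬IsLocalMin (doubledGap u ε t x) y := by
  intro hspace'
  obtain ⟨gx, gxx, hx_t, hx, hxx⟩ := hux
  obtain ⟨gy, gyy, hy_t, hy, hyy⟩ := huy
  have hexp (x' : ℝ) : HasDerivAt (fun z => ε * exp (2 * t - z)) (-(ε * exp (2 * t - x'))) x' :=
    (((hasDerivAt_id x').const_sub (2 * t)).exp.const_mul ε).congr_deriv (by simp)
  have hexp_t : HasDerivAt (fun τ => ε * exp (2 * τ - x)) (2 * (ε * exp (2 * t - x))) t :=
    ((((hasDerivAt_id t).const_mul 2).sub_const x).exp.const_mul ε).congr_deriv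
      (by simp only [id]; ring)
  have htime_le : gxx - gyy + 2 * (ε * exp (2 * t - x)) ≤ 0 := by
    have := nonpos_of_isLocalMinOn_Iic htime ((hx_t.sub hy_t).add hexp_t).hasDerivWithinAt
    linarith
  have hxx_ge : 0 ≤ gxx + ε * exp (2 * t - x) := by
    refine second_deriv_nonneg_of_isLocalMin hspace
      (f' := fun x' => gx x' + -(ε * exp (2 * t - x'))) ?_ ?_
    · filter_upwards [hx] with x' hx' using (hx'.sub_const _).add (hexp x')
    · exact (hxx.add (hexp x).neg).congr_deriv (by ring)
  have hyy_le : gyy ≤ 0 := by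
    have : 0 ≤ -gyy := second_deriv_nonneg_of_isLocalMin hspace'
      (hy.mono fun y' hy' => (hy'.const_sub _).add_const _) hyy.neg
    linarith
  have hexp_pos : 0 < ε * exp (2 * t - x) := by positivity
  linarith

namespace IsGlobalSol

variable {p s₀ : ℝ} {φ s : ℝ → ℝ} {u : ℝ → ℝ → ℝ} {ε t T x y : ℝ}

lemma exists_isMin_doubledGap (h : IsGlobalSol p s₀ φ s u) (hT : 0 < T) (ε : ℝ) :
    ∃ t ∈ Icc 0 T, ∃ x y, 0 ≤ x ∧ x ≤ y ∧ y ≤ s t ∧ ∀ τ ∈ Icc 0 T, ∀ x' y',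
      0 ≤ x' → x' ≤ y' → y' ≤ s τ → doubledGap u ε t x y ≤ doubledGap u ε τ x' y' := by
  have hu : ContinuousOn (Function.uncurry u) (movingDomain (Icc 0 T) s) := (h T hT).u_cont
  have hK : IsCompact (orderedPairs (movingDomain (Icc 0 T) s)) :=
    isCompact_orderedPairs (isCompact_movingDomain (h T hT).s_cont)
  have hcont : ContinuousOn (fun z : (ℝ × ℝ) × (ℝ × ℝ) =>
      Function.uncurry u z.1 - Function.uncurry u z.2 + ε * exp (2 * z.1.1 - z.1.2))
      (orderedPairs (movingDomain (Icc 0 T) s)) :=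
    ((hu.comp (by fun_prop) fun _ hz => hz.1.1).sub
      (hu.comp (by fun_prop) fun _ hz => hz.1.2)).add (by fun_prop)
  have hmem : (T, (0 : ℝ)) ∈ movingDomain (Icc 0 T) s :=
    ⟨⟨hT.le, le_rfl⟩, le_rfl, (h.boundary_pos hT).le⟩
  obtain ⟨⟨⟨t, x⟩, ⟨t', y⟩⟩, ⟨⟨hx, hy⟩, htt', hxy⟩, hmin⟩ := hK.exists_isMinOn
    ⟨((T, 0), (T, 0)), ⟨hmem, hmem⟩, rfl, le_rfl⟩ hcont
  obtain rfl : t = t' := htt'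
  refine ⟨t, hx.1, x, y, hx.2.1, hxy, hy.2.2, fun τ hτ x' y' hx' hxy' hy' => ?_⟩
  have hpair : ((τ, x'), (τ, y')) ∈ orderedPairs (movingDomain (Icc 0 T) s) :=
    ⟨⟨⟨hτ, hx', hxy'.trans hy'⟩, hτ, hx'.trans hxy', hy'⟩, rfl, hxy'⟩
  exact hmin hpair

lemma doubledGap_initial_pos (h : IsGlobalSol p s₀ φ s u) (hφ : AntitoneOn φ (Icc 0 s₀))
    (hε : 0 < ε) (hx : 0 ≤ x) (hxy : x ≤ y) (hy : y ≤ s 0) : 0 < doubledGap u ε 0 x y := by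
  have hsol := h 1 one_pos
  rw [hsol.init_s] at hy
  have hx' : x ∈ Icc 0 s₀ := ⟨hx, hxy.trans hy⟩
  have hy' : y ∈ Icc 0 s₀ := ⟨hx.trans hxy, hy⟩
  rw [doubledGap, hsol.init x hx', hsol.init y hy']
  have hφ_le := sub_nonneg.2 (hφ hx' hy' hxy)
  positivity

lemma doubledGap_not_isLocalMinOn_left (h : IsGlobalSol p s₀ φ s u) (hε : 0 < ε) (ht : 0 < t)
    (y : ℝ) : ¬IsLocalMinOn (fun x => doubledGap u ε t x y) (Ici 0) 0 := by
  intro hmin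
  have hexp : HasDerivAt (fun x => ε * exp (2 * t - x)) (-(ε * exp (2 * t))) 0 :=
    (((hasDerivAt_id 0).const_sub (2 * t)).exp.const_mul ε).congr_deriv (by simp)
  have hslope : 0 ≤ -(u t 0 ^ p) + -(ε * exp (2 * t)) := nonneg_of_isLocalMinOn_Ici hmin
    (((h.hasDerivWithinAt_left ht).sub_const _).add hexp.hasDerivWithinAt)
  have hflux : 0 ≤ u t 0 ^ p := rpow_nonneg (h.nonneg ht ⟨le_rfl, (h.boundary_pos ht).le⟩) p
  have hexp_pos : 0 < ε * exp (2 * t) := by positivity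
  linarith

lemma doubledGap_nonneg_of_isMin (h : IsGlobalSol p s₀ φ s u) (hε : 0 < ε) (ht : t ∈ Ioc 0 T)
    (hx : 0 ≤ x) (hxy : x ≤ y) (hy : y ≤ s t)
    (hmin : ∀ τ ∈ Icc 0 T, ∀ x' y', 0 ≤ x' → x' ≤ y' → y' ≤ s τ →
      doubledGap u ε t x y ≤ doubledGap u ε τ x' y') :
    0 ≤ doubledGap u ε t x y := by
  have htmem := Ioc_subset_Icc_self ht
  have hexp_pos : 0 < ε * exp (2 * t - x) := by positivity
  rcases hxy.eq_or_lt with rfl | hxy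
  · simpa [doubledGap] using hexp_pos.le
  rcases hy.eq_or_lt with rfl | hy
  · rw [doubledGap, (h t ht.1).bc_free t ⟨ht.1, le_rfl⟩]
    linarith [h.nonneg ht.1 ⟨hx, hxy.le⟩]
  exfalso
  rcases hx.eq_or_lt with rfl | hx
  · refine h.doubledGap_not_isLocalMinOn_left hε ht.1 y ?_
    filter_upwards [Icc_mem_nhdsGE hxy] with x' hx'
    exact hmin t htmem x' y hx'.1 hx'.2 hy.le
  · have hs : ContinuousWithinAt s (Iic t) t :=
      ((h T (ht.1.trans_le ht.2)).s_cont t htmem).mono_of_mem_nhdsWithin (Icc_mem_nhdsLE_of_mem ht)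
    refine doubledGap_not_isLocalMin hε (h.hasHeatResidualAt ht.1 ⟨hx, hxy.trans hy⟩)
      (h.hasHeatResidualAt ht.1 ⟨hx.trans hxy, hy⟩) ?_ ?_ ?_
    · filter_upwards [hs.eventually_const_lt hy, Ioc_mem_nhdsLE ht.1] with τ hyτ hτ
      exact hmin τ ⟨hτ.1.le, hτ.2.trans ht.2⟩ x y hx.le hxy.le hyτ.le
    · filter_upwards [Icc_mem_nhds hx hxy] with x' hx'
      exact hmin t htmem x' y hx'.1 hx'.2 hy.le
    · filter_upwards [Icc_mem_nhds hxy hy] with y' hy'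
      exact hmin t htmem x y' hx.le hy'.1 hy'.2

theorem antitoneOn_slice (h : IsGlobalSol p s₀ φ s u) (hφ : AntitoneOn φ (Icc 0 s₀))
    (ht : 0 < t) : AntitoneOn (u t) (Icc 0 (s t)) := by
  intro x hx y hy hxy
  have hgap : ∀ ε > 0, 0 ≤ doubledGap u ε t x y := by
    intro ε hε
    obtain ⟨τ, hτ, x₁, y₁, hx₁, hxy₁, hy₁, hmin⟩ := h.exists_isMin_doubledGap ht ε
    refine le_trans ?_ (hmin t ⟨ht.le, le_rfl⟩ x y hx.1 hxy hy.2)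
    rcases hτ.1.eq_or_lt with rfl | hτ_pos
    · exact (h.doubledGap_initial_pos hφ hε hx₁ hxy₁ hy₁).le
    · exact h.doubledGap_nonneg_of_isMin hε ⟨hτ_pos, hτ.2⟩ hx₁ hxy₁ hy₁ hmin
  refine le_of_forall_pos_le_add fun δ hδ => ?_
  have := hgap (δ / exp (2 * t - x)) (by positivity)
  rw [doubledGap, div_mul_cancel₀ _ (exp_ne_zero _)] at this
  linarith

end IsGlobalSol

/-! ### Quadratic barriers -/

/-- The quadratic profile `A(t) (1 - x/σ(t)) (1 + κ x/σ(t))`, of amplitude `A(t)` at `x = 0` and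
vanishing at `x = σ(t)`. It is concave, hence favours supersolutions, when `κ > 0`, and convex,
hence favours subsolutions, when `κ < 0`. -/
def barrier (κ : ℝ) (A σ : ℝ → ℝ) (t x : ℝ) : ℝ :=
  A t * ((1 - x / σ t) * (1 + κ * (x / σ t)))

section Barrier

variable {κ A' σ' t₀ T t x : ℝ} {A σ : ℝ → ℝ}

lemma barrier_left : barrier κ A σ t 0 = A t := by
  simp [barrier]

lemma barrier_boundary (hσ : σ t ≠ 0) : barrier κ A σ t (σ t) = 0 := by
  simp [barrier, div_self hσ]

lemma barrier_pos (hκ : -1 ≤ κ) (hA : 0 < A t) (hx : 0 ≤ x) (hxσ : x < σ t) :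
    0 < barrier κ A σ t x := by
  have hσ : 0 < σ t := hx.trans_lt hxσ
  have hy : 0 ≤ x / σ t := by positivity
  have hy' : x / σ t < 1 := (div_lt_one hσ).2 hxσ
  have : 0 < 1 + κ * (x / σ t) := by nlinarith
  have : 0 < 1 - x / σ t := sub_pos.2 hy'
  rw [barrier]
  positivity

lemma isFront_barrier (hκ : -1 ≤ κ) (hA : ContinuousOn A (Icc t₀ T))
    (hA_pos : ∀ t ∈ Icc t₀ T, 0 < A t) (hσ : ContinuousOn σ (Icc t₀ T))
    (hσ_pos : ∀ t ∈ Icc t₀ T, 0 < σ t) : IsFront t₀ T σ (barrier κ A σ) where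
  continuousOn_boundary := hσ
  boundary_pos := hσ_pos
  continuousOn := by
    have hA' : ContinuousOn (fun q : ℝ × ℝ => A q.1) (movingDomain (Icc t₀ T) σ) :=
      hA.comp continuousOn_fst fun _ hq => hq.1
    have hy : ContinuousOn (fun q : ℝ × ℝ => q.2 / σ q.1) (movingDomain (Icc t₀ T) σ) :=
      continuousOn_snd.div (hσ.comp continuousOn_fst fun _ hq => hq.1)
        fun q hq => (hσ_pos q.1 hq.1).ne'
    exact hA'.mul ((continuousOn_const.sub hy).mul (continuousOn_const.add (hy.const_mul κ)))
  nonneg := by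
    intro t ht x hx
    rcases hx.2.eq_or_lt with rfl | hlt
    · rw [barrier_boundary (hσ_pos t ht).ne']
    · exact (barrier_pos hκ (hA_pos t ht) hx.1 hlt).le
  eq_zero := fun t ht => barrier_boundary (hσ_pos t ht).ne'

lemma hasDerivAt_barrier (κ : ℝ) (A σ : ℝ → ℝ) (t x : ℝ) :
    HasDerivAt (barrier κ A σ t) (A t / σ t * (κ - 1 - 2 * κ * (x / σ t))) x := by
  have hy : HasDerivAt (fun z => z / σ t) (1 / σ t) x := (hasDerivAt_id x).div_const (σ t)
  exact (((hy.const_sub 1).mul ((hy.const_mul κ).const_add 1)).const_mul (A t)).congr_deriv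
    (by ring)

lemma hasHeatResidualAt_barrier (κ x : ℝ) (hA : HasDerivAt A A' t) (hσ : HasDerivAt σ σ' t)
    (hσ₀ : σ t ≠ 0) :
    HasHeatResidualAt (barrier κ A σ)
      (A' * ((1 - x / σ t) * (1 + κ * (x / σ t)))
        + A t * (σ' / σ t) * (x / σ t * (1 - κ + 2 * κ * (x / σ t)))
        + 2 * κ * A t / σ t ^ 2) t x := by
  refine ⟨fun z => A t / σ t * (κ - 1 - 2 * κ * (z / σ t)), -(2 * κ * A t / σ t ^ 2), ?_,
    .of_forall fun z => hasDerivAt_barrier κ A σ t z, ?_⟩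
  · have hy : HasDerivAt (fun τ => x / σ τ) (-(x / σ t * (σ' / σ t))) t :=
      ((hasDerivAt_const t x).div hσ hσ₀).congr_deriv (by field)
    exact (hA.mul ((hy.const_sub 1).mul ((hy.const_mul κ).const_add 1))).congr_deriv
      (by simp only [Pi.mul_apply]; ring)
  · exact (((((hasDerivAt_id x).div_const (σ t)).const_mul (2 * κ)).const_sub (κ - 1)).const_mul
      (A t / σ t)).congr_deriv (by field)

lemma hasStefanResidualAt_barrier (κ : ℝ) (A : ℝ → ℝ) (hσ : HasDerivAt σ σ' t) (hσ₀ : σ t ≠ 0) :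
    HasStefanResidualAt σ (barrier κ A σ) (σ' - (1 + κ) * A t / σ t) t :=
  ⟨-((1 + κ) * A t / σ t), hσ.congr_deriv (by ring),
    (hasDerivAt_barrier κ A σ t (σ t)).hasDerivWithinAt.congr_deriv (by field)⟩

end Barrier

/-! ### A solution with a small slice stays bounded -/

/-- The time profile `exp(-(t - t₀)/(16 L²))` of the upper barrier. The rate makes its decay slower
than diffusion on any interval of length less than `4 L`. -/
def upperDecay (L t₀ t : ℝ) : ℝ :=
  exp (-(t - t₀) / (16 * L ^ 2))

/-- The boundary of the upper barrier, which increases from `2 L` at time `t₀` to `4 L`. -/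
def upperBoundary (L t₀ t : ℝ) : ℝ :=
  2 * L * (2 - upperDecay L t₀ t)

/-- A supersolution of the Stefan problem on a front that never reaches `4 L`. -/
def upperBarrier (L ε t₀ : ℝ) : ℝ → ℝ → ℝ :=
  barrier (1 / 2) (fun t => ε * upperDecay L t₀ t) (upperBoundary L t₀)

section UpperBarrier

variable {L ε t₀ t x : ℝ}

lemma upperDecay_pos : 0 < upperDecay L t₀ t :=
  exp_pos _

lemma upperDecay_le_one (ht : t₀ ≤ t) : upperDecay L t₀ t ≤ 1 :=
  exp_le_one_iff.2 (div_nonpos_of_nonpos_of_nonneg (by linarith) (by positivity))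

lemma upperBoundary_mem (hL : 0 < L) (ht : t₀ ≤ t) :
    upperBoundary L t₀ t ∈ Ico (2 * L) (4 * L) := by
  have hpos := mul_pos hL (upperDecay_pos (L := L) (t₀ := t₀) (t := t))
  have hle := mul_le_mul_of_nonneg_left (upperDecay_le_one (L := L) ht) hL.le
  constructor <;> rw [upperBoundary] <;> linarith

lemma upperBoundary_pos (hL : 0 < L) (ht : t₀ ≤ t) : 0 < upperBoundary L t₀ t := by
  linarith [(upperBoundary_mem hL ht).1]

lemma hasDerivAt_upperDecay (L t₀ t : ℝ) :
    HasDerivAt (upperDecay L t₀) (-(upperDecay L t₀ t / (16 * L ^ 2))) t :=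
  (((hasDerivAt_id t).sub_const t₀).neg.div_const (16 * L ^ 2)).exp.congr_deriv
    (by simp only [upperDecay, Pi.neg_apply, id]; ring)

lemma hasDerivAt_upperBoundary (hL : L ≠ 0) (t₀ t : ℝ) :
    HasDerivAt (upperBoundary L t₀) (upperDecay L t₀ t / (8 * L)) t :=
  (((hasDerivAt_upperDecay L t₀ t).const_sub 2).const_mul (2 * L)).congr_deriv (by field)

lemma isFront_upperBarrier (hL : 0 < L) (hε : 0 < ε) (T : ℝ) :
    IsFront t₀ T (upperBoundary L t₀) (upperBarrier L ε t₀) :=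
  isFront_barrier (by norm_num)
    (fun t _ => ((hasDerivAt_upperDecay L t₀ t).const_mul ε).continuousAt.continuousWithinAt)
    (fun _ _ => mul_pos hε upperDecay_pos)
    (fun t _ => (hasDerivAt_upperBoundary hL.ne' t₀ t).continuousAt.continuousWithinAt)
    (fun _ ht => upperBoundary_pos hL ht.1)

lemma upperBarrier_pos (hε : 0 < ε) (hx : 0 ≤ x) (hxσ : x < upperBoundary L t₀ t) :
    0 < upperBarrier L ε t₀ t x :=
  barrier_pos (by norm_num) (mul_pos hε upperDecay_pos) hx hxσ

lemma le_upperBarrier_initial (hL : 0 < L) (hε : 0 < ε) (hx : 0 ≤ x) (hxL : x ≤ L) :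
    5 / 8 * ε ≤ upperBarrier L ε t₀ t₀ x := by
  have hy : 0 ≤ x / (2 * L) := by positivity
  have hy' : x / (2 * L) ≤ 1 / 2 := (div_le_iff₀ (by positivity)).2 (by linarith)
  have hprofile : 5 / 8 ≤ (1 - x / (2 * L)) * (1 + 1 / 2 * (x / (2 * L))) := by nlinarith
  have hdecay : upperDecay L t₀ t₀ = 1 := by simp [upperDecay]
  have hboundary : upperBoundary L t₀ t₀ = 2 * L := by rw [upperBoundary, hdecay]; ring
  rw [upperBarrier, barrier, hdecay, hboundary]
  nlinarith

lemma exists_hasHeatResidualAt_upperBarrier (hL : 0 < L) (hε : 0 < ε) (ht : t₀ ≤ t) (hx : 0 < x)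
    (hxσ : x < upperBoundary L t₀ t) :
    ∃ r > 0, HasHeatResidualAt (upperBarrier L ε t₀) r t x := by
  have hσ := upperBoundary_pos hL ht
  refine ⟨_, ?_, hasHeatResidualAt_barrier (1 / 2) x
    ((hasDerivAt_upperDecay L t₀ t).const_mul ε) (hasDerivAt_upperBoundary hL.ne' t₀ t) hσ.ne'⟩
  have hE := upperDecay_pos (L := L) (t₀ := t₀) (t := t)
  have hσ_lt := (upperBoundary_mem hL ht).2
  set E := upperDecay L t₀ t
  set σ := upperBoundary L t₀ t
  have hy : 0 < x / σ := by positivity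
  have hprofile : (1 - x / σ) * (1 + 1 / 2 * (x / σ)) ≤ 1 := by nlinarith
  have hdecay : -(ε * E / (16 * L ^ 2))
      ≤ ε * -(E / (16 * L ^ 2)) * ((1 - x / σ) * (1 + 1 / 2 * (x / σ))) := by
    rw [mul_neg, neg_mul, neg_le_neg_iff, ← mul_div_assoc]
    exact mul_le_of_le_one_right (by positivity) hprofile
  have htransport :
      0 < ε * E * (E / (8 * L) / σ) * (x / σ * (1 - 1 / 2 + 2 * (1 / 2) * (x / σ))) := by
    have : 0 < 1 - 1 / 2 + 2 * (1 / 2) * (x / σ) := by linarith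
    positivity
  have hdiffusion : ε * E / (16 * L ^ 2) < 2 * (1 / 2) * (ε * E) / σ ^ 2 := by
    rw [mul_one_div_cancel two_ne_zero, one_mul]
    gcongr
    nlinarith
  linarith

lemma exists_hasStefanResidualAt_upperBarrier (hL : 0 < L) (hε : 0 < ε) (hε' : ε < 1 / 6)
    (ht : t₀ ≤ t) :
    ∃ r > 0, HasStefanResidualAt (upperBoundary L t₀) (upperBarrier L ε t₀) r t := by
  have hσ := upperBoundary_pos hL ht
  refine ⟨_, ?_, hasStefanResidualAt_barrier (1 / 2) (fun τ => ε * upperDecay L t₀ τ)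
    (hasDerivAt_upperBoundary hL.ne' t₀ t) hσ.ne'⟩
  have hE := upperDecay_pos (L := L) (t₀ := t₀) (t := t)
  have hσ_ge := (upperBoundary_mem hL ht).1
  rw [gt_iff_lt, sub_pos]
  calc (1 + 1 / 2) * (ε * upperDecay L t₀ t) / upperBoundary L t₀ t
      ≤ (1 + 1 / 2) * (ε * upperDecay L t₀ t) / (2 * L) := by gcongr
    _ < (1 + 1 / 2) * (1 / 6 * upperDecay L t₀ t) / (2 * L) := by gcongr
    _ = upperDecay L t₀ t / (8 * L) := by field

lemma exists_hasDerivWithinAt_upperBarrier_left {p : ℝ} (hp : 1 < p) (hL : 0 < L) (hε : 0 < ε)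
    (hεL : ε ^ (p - 1) * (8 * L) ≤ 1) (ht : t₀ ≤ t) :
    ∃ m < -(upperBarrier L ε t₀ t 0 ^ p),
      HasDerivWithinAt (upperBarrier L ε t₀ t) m (Ici 0) 0 := by
  refine ⟨_, ?_, (hasDerivAt_barrier (1 / 2) (fun τ => ε * upperDecay L t₀ τ)
    (upperBoundary L t₀) t 0).hasDerivWithinAt⟩
  have hA : 0 < ε * upperDecay L t₀ t := mul_pos hε upperDecay_pos
  have hσ := upperBoundary_pos hL ht
  have hσ_lt := (upperBoundary_mem hL ht).2
  have hA_le : ε * upperDecay L t₀ t ≤ ε := mul_le_of_le_one_right hε.le (upperDecay_le_one ht)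
  have hpow : (ε * upperDecay L t₀ t) ^ (p - 1) < 1 / (2 * upperBoundary L t₀ t) := by
    calc (ε * upperDecay L t₀ t) ^ (p - 1) ≤ ε ^ (p - 1) :=
          rpow_le_rpow hA.le hA_le (by linarith)
      _ ≤ 1 / (8 * L) := (le_div_iff₀ (by positivity)).2 hεL
      _ < 1 / (2 * upperBoundary L t₀ t) := one_div_lt_one_div_of_lt (by positivity) (by linarith)
  have hsplit : (ε * upperDecay L t₀ t) ^ p
      = ε * upperDecay L t₀ t * (ε * upperDecay L t₀ t) ^ (p - 1) := by
    rw [← rpow_one_add' hA.le (by linarith), add_sub_cancel]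
  have hflux : (ε * upperDecay L t₀ t) ^ p
      < ε * upperDecay L t₀ t * (1 / (2 * upperBoundary L t₀ t)) := by
    rw [hsplit]
    gcongr
  rw [upperBarrier, barrier_left, lt_neg]
  convert hflux using 1
  field

end UpperBarrier

theorem IsGlobalSol.boundary_lt_of_small_slice {p s₀ ε t₀ T : ℝ} {φ s : ℝ → ℝ} {u : ℝ → ℝ → ℝ}
    (h : IsGlobalSol p s₀ φ s u) (hp : 1 < p) (ht₀ : 0 < t₀) (hε : 0 < ε) (hε' : ε < 1 / 6)
    (hεs : ε ^ (p - 1) * (8 * s t₀) ≤ 1) (hsmall : ∀ x ∈ Icc 0 (s t₀), u t₀ x < 5 / 8 * ε)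
    (hT : t₀ ≤ T) : s T < 4 * s t₀ := by
  have hL : 0 < s t₀ := h.boundary_pos ht₀
  refine ((h.isFront ht₀ hT).boundary_lt (isFront_upperBarrier (t₀ := t₀) hL hε T) ?_ ?_ ?_ ?_ ?_
    T ⟨hT, le_rfl⟩).trans (upperBoundary_mem hL hT).2
  · intro x hx
    have hxs := hx.2.trans (min_le_left _ _)
    exact (hsmall x ⟨hx.1, hxs⟩).trans_le (le_upperBarrier_initial hL hε hx.1 hxs)
  · intro t ht x hx hxs hxσ
    obtain ⟨r, hr_pos, hr⟩ := exists_hasHeatResidualAt_upperBarrier hL hε ht.1.le hx hxσ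
    exact ⟨0, r, h.hasHeatResidualAt (ht₀.trans ht.1) ⟨hx, hxs⟩, hr, hr_pos⟩
  · intro t ht heq
    obtain ⟨m, hm_lt, hm⟩ := exists_hasDerivWithinAt_upperBarrier_left hp hL hε hεs ht.1.le
    rw [← heq] at hm_lt
    exact ⟨_, m, h.hasDerivWithinAt_left (ht₀.trans ht.1), hm, hm_lt⟩
  · intro t ht _
    obtain ⟨r, hr_pos, hr⟩ := exists_hasStefanResidualAt_upperBarrier hL hε hε' ht.1.le
    exact ⟨0, r, h.hasStefanResidualAt (ht₀.trans ht.1), hr, hr_pos⟩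
  · intro t ht hlt _
    exact (upperBarrier_pos hε (h.boundary_pos (ht₀.trans ht.1)).le hlt).ne'

/-! ### A hot fixed boundary drives the front -/

/-- The boundary of the lower barrier: it starts from `η` at time `t₀` and solves `σ σ' = b/4`. -/
def lowerBoundary (η b t₀ t : ℝ) : ℝ :=
  √(η ^ 2 + b * (t - t₀) / 2)

/-- A subsolution of the Stefan problem with constant temperature `b` at `x = 0`. -/
def lowerBarrier (η b t₀ : ℝ) : ℝ → ℝ → ℝ :=
  barrier (-1 / 2) (fun _ => b) (lowerBoundary η b t₀)

section LowerBarrier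

variable {η b t₀ t x : ℝ}

lemma lowerBoundary_initial (hη : 0 ≤ η) : lowerBoundary η b t₀ t₀ = η := by
  simp [lowerBoundary, sqrt_sq hη]

lemma lowerBoundary_radicand_pos (hη : 0 < η) (hb : 0 ≤ b) (ht : t₀ ≤ t) :
    0 < η ^ 2 + b * (t - t₀) / 2 := by
  have := sub_nonneg.2 ht
  positivity

lemma lowerBoundary_pos (hη : 0 < η) (hb : 0 ≤ b) (ht : t₀ ≤ t) : 0 < lowerBoundary η b t₀ t :=
  sqrt_pos.2 (lowerBoundary_radicand_pos hη hb ht)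

lemma hasDerivAt_lowerBoundary (hη : 0 < η) (hb : 0 ≤ b) (ht : t₀ ≤ t) :
    HasDerivAt (lowerBoundary η b t₀) (b / (4 * lowerBoundary η b t₀ t)) t :=
  (((((hasDerivAt_id t).sub_const t₀).const_mul b).div_const 2).const_add (η ^ 2)).sqrt
    (lowerBoundary_radicand_pos hη hb ht).ne' |>.congr_deriv
      (by simp only [lowerBoundary, id]; ring)

lemma isFront_lowerBarrier (hη : 0 < η) (hb : 0 < b) (T : ℝ) :
    IsFront t₀ T (lowerBoundary η b t₀) (lowerBarrier η b t₀) :=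
  isFront_barrier (by norm_num) continuousOn_const (fun _ _ => hb)
    (fun _ ht => (hasDerivAt_lowerBoundary hη hb.le ht.1).continuousAt.continuousWithinAt)
    (fun _ ht => lowerBoundary_pos hη hb.le ht.1)

lemma lowerBarrier_initial_le (hη : 0 < η) (hb : 0 ≤ b) (hx : x ∈ Icc 0 η) :
    lowerBarrier η b t₀ t₀ x ≤ b := by
  have hy : 0 ≤ x / η := div_nonneg hx.1 hη.le
  have hy' : x / η ≤ 1 := (div_le_one hη).2 hx.2
  rw [lowerBarrier, barrier, lowerBoundary_initial hη.le]
  exact mul_le_of_le_one_right hb (by nlinarith)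

lemma exists_hasHeatResidualAt_lowerBarrier (hη : 0 < η) (hb : 0 < b) (hb' : b < 1) (ht : t₀ ≤ t)
    (x : ℝ) :
    ∃ r < 0, HasHeatResidualAt (lowerBarrier η b t₀) r t x := by
  have hσ := lowerBoundary_pos hη hb.le ht
  refine ⟨_, ?_, hasHeatResidualAt_barrier (-1 / 2) x (hasDerivAt_const t b)
    (hasDerivAt_lowerBoundary hη hb.le ht) hσ.ne'⟩
  set σ := lowerBoundary η b t₀ t
  have hprofile : x / σ * (3 / 2 - x / σ) < 1 := by nlinarith [sq_nonneg (x / σ - 3 / 4)]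
  have hfactor : b / 4 * (x / σ * (3 / 2 - x / σ)) - 1 < 0 := by nlinarith
  calc _ = b / σ ^ 2 * (b / 4 * (x / σ * (3 / 2 - x / σ)) - 1) := by field
    _ < 0 := mul_neg_of_pos_of_neg (by positivity) hfactor

lemma exists_hasStefanResidualAt_lowerBarrier (hη : 0 < η) (hb : 0 < b) (ht : t₀ ≤ t) :
    ∃ r < 0, HasStefanResidualAt (lowerBoundary η b t₀) (lowerBarrier η b t₀) r t := by
  have hσ := lowerBoundary_pos hη hb.le ht
  refine ⟨_, ?_, hasStefanResidualAt_barrier (-1 / 2) (fun _ => b)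
    (hasDerivAt_lowerBoundary hη hb.le ht) hσ.ne'⟩
  calc _ = -(b / (4 * lowerBoundary η b t₀ t)) := by field
    _ < 0 := neg_neg_of_pos (by positivity)

lemma exists_hasDerivWithinAt_lowerBarrier_boundary (hη : 0 < η) (hb : 0 < b) (ht : t₀ ≤ t) :
    ∃ m < 0, HasDerivWithinAt (lowerBarrier η b t₀ t) m (Iic (lowerBoundary η b t₀ t))
      (lowerBoundary η b t₀ t) := by
  have hσ := lowerBoundary_pos hη hb.le ht
  refine ⟨_, ?_, (hasDerivAt_barrier (-1 / 2) (fun _ => b) _ t _).hasDerivWithinAt⟩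
  calc _ = -(b / (2 * lowerBoundary η b t₀ t)) := by field
    _ < 0 := neg_neg_of_pos (by positivity)

end LowerBarrier

namespace IsGlobalSol

variable {p s₀ η b t₀ T t : ℝ} {φ s : ℝ → ℝ} {u : ℝ → ℝ → ℝ}

lemma slope_nonneg_of_touch_zero {v : ℝ → ℝ} {σ m : ℝ} (h : IsGlobalSol p s₀ φ s u) (ht : 0 < t)
    (hσ : σ ∈ Ioo 0 (s t)) (hle : ∀ x ∈ Icc 0 σ, v x ≤ u t x) (hv : v σ = 0) (hu : u t σ = 0)
    (hm : HasDerivWithinAt v m (Iic σ) σ) : 0 ≤ m := by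
  have hmin : IsLocalMin (u t) σ := by
    filter_upwards [Icc_mem_nhds hσ.1 hσ.2] with x hx
    rw [hu]
    exact h.nonneg ht hx
  have hderiv : HasDerivAt (u t) 0 σ := hmin.deriv_eq_zero ▸
    ((h t ht).ux_diff t ⟨ht, le_rfl⟩ σ hσ).hasDerivAt
  exact slope_le_of_touch_right hσ.1 hle (hv.trans hu.symm) hm hderiv.hasDerivWithinAt

theorem lowerBoundary_lt (h : IsGlobalSol p s₀ φ s u) (ht₀ : 0 < t₀) (hT : t₀ ≤ T) (hη : 0 < η)
    (hb : 0 < b) (hb' : b < 1) (hinit : ∀ x ∈ Icc 0 η, b < u t₀ x)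
    (hhot : ∀ t ∈ Icc t₀ T, b < u t 0) : lowerBoundary η b t₀ T < s T := by
  refine (isFront_lowerBarrier hη hb T).boundary_lt (h.isFront ht₀ hT) ?_ ?_ ?_ ?_ ?_ T
    ⟨hT, le_rfl⟩
  · intro x hx
    rw [lowerBoundary_initial hη.le] at hx
    have hx' : x ∈ Icc 0 η := ⟨hx.1, hx.2.trans (min_le_left _ _)⟩
    exact (lowerBarrier_initial_le hη hb.le hx').trans_lt (hinit x hx')
  · intro t ht x hx _ hxs
    obtain ⟨r, hr_neg, hr⟩ := exists_hasHeatResidualAt_lowerBarrier hη hb hb' ht.1.le x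
    exact ⟨r, 0, hr, h.hasHeatResidualAt (ht₀.trans ht.1) ⟨hx, hxs⟩, hr_neg⟩
  · intro t ht heq
    rw [lowerBarrier, barrier_left] at heq
    exact absurd heq (hhot t (Ioc_subset_Icc_self ht)).ne
  · intro t ht _
    obtain ⟨r, hr_neg, hr⟩ := exists_hasStefanResidualAt_lowerBarrier (t₀ := t₀) hη hb ht.1.le
    exact ⟨r, 0, hr, h.hasStefanResidualAt (ht₀.trans ht.1), hr_neg⟩
  · intro t ht hlt hle hzero
    have hσ := lowerBoundary_pos hη hb.le ht.1.le
    obtain ⟨m, hm_neg, hm⟩ := exists_hasDerivWithinAt_lowerBarrier_boundary hη hb ht.1.le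
    exact hm_neg.not_ge (h.slope_nonneg_of_touch_zero (ht₀.trans ht.1) ⟨hσ, hlt⟩ hle
      (barrier_boundary hσ.ne') hzero hm)

theorem mul_le_sq_boundary (h : IsGlobalSol p s₀ φ s u) (ht₀ : 0 < t₀) (hT : t₀ ≤ T) (hb : 0 < b)
    (hb' : b < 1) (hhot : ∀ t ∈ Icc t₀ T, b < u t 0) : b * (T - t₀) / 2 ≤ s T ^ 2 := by
  have hs := h.boundary_pos ht₀
  obtain ⟨η, hη, hinit⟩ : ∃ η > 0, ∀ x ∈ Icc 0 η, b < u t₀ x := by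
    have hnear : ∀ᶠ x in 𝓝[Icc 0 (s t₀)] 0, b < u t₀ x :=
      (h.continuousOn_slice ht₀ 0 (left_mem_Icc.2 hs.le)).eventually_const_lt
        (hhot t₀ ⟨le_rfl, hT⟩)
    rw [nhdsWithin_Icc_eq_nhdsGE hs] at hnear
    obtain ⟨η, hη, hsub⟩ := mem_nhdsGE_iff_exists_Icc_subset.1 hnear
    exact ⟨η, hη, hsub⟩
  have hlt := h.lowerBoundary_lt ht₀ hT hη hb hb' hinit hhot
  have hsq : η ^ 2 + b * (T - t₀) / 2 < s T ^ 2 :=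
    (sqrt_lt' (h.boundary_pos (ht₀.trans_le hT))).1 hlt
  linarith [sq_nonneg η]

end IsGlobalSol

/-! ### Growth of the free boundary -/

/-- The amplitude `(8L)^(-1/(p-1)) / 12` at which the upper barrier started on `[0, 2L]` absorbs the
nonlinear flux: below it a solution occupying `[0, L]` can no longer expand to infinity. -/
def criticalAmplitude (p L : ℝ) : ℝ :=
  (8 * L) ^ (-(1 / (p - 1))) / 12

section CriticalAmplitude

variable {p L T : ℝ}

lemma criticalAmplitude_pos (hL : 0 < L) : 0 < criticalAmplitude p L := by
  rw [criticalAmplitude]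
  positivity

lemma criticalAmplitude_lt (hp : 1 < p) (hL : 1 ≤ L) : criticalAmplitude p L < 1 / 6 := by
  have hexp : 0 ≤ 1 / (p - 1) := one_div_nonneg.2 (by linarith)
  have : (8 * L) ^ (-(1 / (p - 1))) ≤ 1 :=
    rpow_le_one_of_one_le_of_nonpos (by linarith) (neg_nonpos.2 hexp)
  rw [criticalAmplitude]
  linarith

lemma criticalAmplitude_rpow_mul_le (hp : 1 < p) (hL : 0 < L) :
    criticalAmplitude p L ^ (p - 1) * (8 * L) ≤ 1 := by
  have hp' : 0 < p - 1 := sub_pos.2 hp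
  have hpow : ((8 * L) ^ (-(1 / (p - 1)))) ^ (p - 1) = (8 * L)⁻¹ := by
    rw [← rpow_mul (by positivity), neg_mul, one_div_mul_cancel hp'.ne', rpow_neg_one]
  rw [criticalAmplitude, div_rpow (by positivity) (by norm_num), hpow, div_mul_eq_mul_div,
    inv_mul_cancel₀ (by positivity)]
  exact (div_le_one (by positivity)).2 (one_le_rpow (by norm_num) hp'.le)

lemma criticalAmplitude_antitoneOn (hp : 1 < p) : AntitoneOn (criticalAmplitude p) (Ioi 0) := by
  intro L₁ hL₁ L₂ _ hle
  have hexp : 0 ≤ 1 / (p - 1) := one_div_nonneg.2 (by linarith)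
  have hL₁ : 0 < 8 * L₁ := mul_pos (by norm_num) hL₁
  exact div_le_div_of_nonneg_right
    (rpow_le_rpow_of_nonpos hL₁ (by linarith) (neg_nonpos.2 hexp)) (by norm_num)

lemma criticalAmplitude_eq_mul (p : ℝ) (hL : 0 ≤ L) :
    criticalAmplitude p L = criticalAmplitude p 1 * L ^ (-(1 / (p - 1))) := by
  rw [criticalAmplitude, criticalAmplitude, mul_rpow (by norm_num) hL, mul_one]
  ring

lemma rpow_le_of_criticalAmplitude_mul_le (hp : 1 < p) (hT : 0 < T) (hL : 0 < L)
    (h : criticalAmplitude p L * T / 8 ≤ L ^ 2) :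
    (criticalAmplitude p 1 / 8) ^ ((p - 1) / (2 * p - 1)) ≤
      T ^ (-(p - 1) / (2 * p - 1)) * L := by
  have hp₁ : 0 < p - 1 := by linarith
  have hp₂ : 0 < 2 * p - 1 := by linarith
  have hc : 0 < criticalAmplitude p 1 := criticalAmplitude_pos one_pos
  have hinv : L ^ (-(1 / (p - 1))) * L ^ (1 / (p - 1)) = 1 := by
    rw [← rpow_add hL, neg_add_cancel, rpow_zero]
  have hexponent : (2 + 1 / (p - 1)) * ((p - 1) / (2 * p - 1)) = 1 := by
    field_simp
    ring
  have hpower : criticalAmplitude p 1 / 8 * T ≤ L ^ (2 + 1 / (p - 1)) := by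
    calc criticalAmplitude p 1 / 8 * T
        = criticalAmplitude p L * T / 8 * L ^ (1 / (p - 1)) := by
          rw [criticalAmplitude_eq_mul p hL.le]
          linear_combination -(criticalAmplitude p 1 * T / 8) * hinv
      _ ≤ L ^ 2 * L ^ (1 / (p - 1)) := by gcongr
      _ = L ^ (2 + 1 / (p - 1)) := by rw [rpow_add hL, rpow_two]
  have hroot := rpow_le_rpow (by positivity) hpower (by positivity : 0 ≤ (p - 1) / (2 * p - 1))
  rw [← rpow_mul hL.le, hexponent, rpow_one, mul_rpow (by positivity) hT.le] at hroot
  rw [neg_div, rpow_neg hT.le, inv_mul_eq_div]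
  exact (le_div_iff₀ (by positivity)).2 hroot

end CriticalAmplitude

namespace IsGlobalSol

variable {p s₀ t₀ T t : ℝ} {φ s : ℝ → ℝ} {u : ℝ → ℝ → ℝ}

theorem criticalAmplitude_le_of_tendsto (h : IsGlobalSol p s₀ φ s u) (hp : 1 < p)
    (hφ : AntitoneOn φ (Icc 0 s₀)) (hgrow : Tendsto s atTop atTop) (ht : 0 < t) (hs : 1 ≤ s t) :
    5 / 8 * criticalAmplitude p (s t) ≤ u t 0 := by
  by_contra! hcold
  have hs_pos := h.boundary_pos ht
  have hslice : ∀ x ∈ Icc 0 (s t), u t x < 5 / 8 * criticalAmplitude p (s t) := fun x hx =>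
    (h.antitoneOn_slice hφ ht (left_mem_Icc.2 hs_pos.le) hx hx.1).trans_lt hcold
  obtain ⟨T, hsT, hT⟩ :=
    ((hgrow.eventually_ge_atTop (4 * s t)).and (eventually_ge_atTop t)).exists
  exact hsT.not_gt (h.boundary_lt_of_small_slice hp ht (criticalAmplitude_pos hs_pos)
    (criticalAmplitude_lt hp hs) (criticalAmplitude_rpow_mul_le hp hs_pos) hslice hT)

theorem criticalAmplitude_mul_le_sq (h : IsGlobalSol p s₀ φ s u) (hp : 1 < p)
    (hφ : AntitoneOn φ (Icc 0 s₀)) (hgrow : Tendsto s atTop atTop) (ht₀ : 0 < t₀)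
    (hs : ∀ t, t₀ ≤ t → 1 ≤ s t) (hT : 2 * t₀ ≤ T) :
    criticalAmplitude p (s T) * T / 8 ≤ s T ^ 2 := by
  have ht₀T : t₀ ≤ T := by linarith
  have hT_pos : 0 < T := ht₀.trans_le ht₀T
  have hb : 0 < criticalAmplitude p (s T) := criticalAmplitude_pos (h.boundary_pos hT_pos)
  have hb' : criticalAmplitude p (s T) < 1 / 6 := criticalAmplitude_lt hp (hs T ht₀T)
  have hhot : ∀ t ∈ Icc t₀ T, criticalAmplitude p (s T) / 2 < u t 0 := by
    intro t ht
    have ht_pos : 0 < t := ht₀.trans_le ht.1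
    have hmono : criticalAmplitude p (s T) ≤ criticalAmplitude p (s t) :=
      criticalAmplitude_antitoneOn hp (h.boundary_pos ht_pos) (h.boundary_pos hT_pos)
        (h.monotoneOn_boundary ht_pos hT_pos ht.2)
    linarith [h.criticalAmplitude_le_of_tendsto hp hφ hgrow ht_pos (hs t ht.1)]
  have hspread := h.mul_le_sq_boundary ht₀ ht₀T (half_pos hb) (by linarith) hhot
  nlinarith

end IsGlobalSol

lemma memW.antitoneOn {s₀ : ℝ} {φ : ℝ → ℝ} (hW : memW s₀ φ)
    (hdiff : ∀ x ∈ Ioo 0 s₀, DifferentiableAt ℝ φ x) (hderiv : ∀ x ∈ Ioo 0 s₀, deriv φ x ≤ 0) :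
    AntitoneOn φ (Icc 0 s₀) := by
  obtain ⟨-, ⟨K, hK⟩, -⟩ := hW
  refine antitoneOn_of_deriv_nonpos (convex_Icc 0 s₀) hK.continuousOn ?_ ?_ <;> rw [interior_Icc]
  · exact fun x hx => (hdiff x hx).differentiableWithinAt
  · exact hderiv

theorem stmt_3_general {p s₀ : ℝ} (hp : 1 < p) {φ : ℝ → ℝ} (hφ : AntitoneOn φ (Icc 0 s₀))
    {s : ℝ → ℝ} {u : ℝ → ℝ → ℝ} (hsol : IsGlobalSol p s₀ φ s u) (hgrow : Tendsto s atTop atTop) :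
    ∃ c : ℝ, 0 < c ∧ ∀ᶠ t in atTop, c ≤ t ^ (-(p - 1) / (2 * p - 1)) * s t := by
  obtain ⟨t₁, ht₁⟩ := eventually_atTop.1 (hgrow.eventually_ge_atTop 1)
  have ht₀ : 0 < max t₁ 1 := zero_lt_one.trans_le (le_max_right _ _)
  have hs : ∀ t, max t₁ 1 ≤ t → 1 ≤ s t := fun t ht => ht₁ t ((le_max_left _ _).trans ht)
  have hc : 0 < criticalAmplitude p 1 := criticalAmplitude_pos one_pos
  refine ⟨(criticalAmplitude p 1 / 8) ^ ((p - 1) / (2 * p - 1)), by positivity, ?_⟩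
  filter_upwards [eventually_ge_atTop (2 * max t₁ 1)] with T hT
  have hT_pos : 0 < T := by linarith
  exact rpow_le_of_criticalAmplitude_mul_le hp hT_pos (hsol.boundary_pos hT_pos)
    (hsol.criticalAmplitude_mul_le_sq hp hφ hgrow ht₀ hs hT)

/-- Theorem 1.3: lower bound on the growth of the free boundary when `∂ₓφ ≤ 0`. -/
theorem stmt_3 (p : ℝ) (hp : 1 < p) (s₀ : ℝ) (φ : ℝ → ℝ) (hW : memW s₀ φ)
    (hφdiff : ∀ x ∈ Ioo 0 s₀, DifferentiableAt ℝ φ x)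
    (hφC1 : ContinuousOn (deriv φ) (Ioo 0 s₀))
    (hφmono : ∀ x ∈ Ioo 0 s₀, deriv φ x ≤ 0)
    (lam : ℝ) (hlam : 0 < lam) (s : ℝ → ℝ) (u : ℝ → ℝ → ℝ)
    (hsol : IsGlobalSol p s₀ (fun x => lam * φ x) s u)
    (hgrow : Tendsto s atTop atTop) :
    ∃ c : ℝ, 0 < c ∧ ∀ᶠ t in atTop, c ≤ t ^ (-(p - 1) / (2 * p - 1)) * s t :=
  stmt_3_general hp ((monotone_mul_left_of_nonneg hlam.le).comp_antitoneOn
    (hW.antitoneOn hφdiff hφmono)) hsol hgrow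
end
end

section
/- Let (s,u) be a global-in-time solution of problem (P) with initial data (s₀,φ) ∈ W. Then inf_{t>0} E(s(t),u(t)) ≥ 0 and ∫₀^∞ s'(t)³ dt < ∞. -/
open Set MeasureTheory Filter Topology Real
open scoped ENNReal

noncomputable section

/-!
Write `E` for the energy and `M` for half the squared `L²` norm of `u(t)`. Formally
`E' = -s'³ / 2 - ∫ (∂ₜu)²` and `M' = u(t, 0) ^ (p + 1) - ∫ (∂ₓu)² ≥ -(p + 1) E`, and the
Cauchy–Schwarz inequality `M'² ≤ 2 M ∫ (∂ₜu)²` gives `E' ≤ -s'³ / 2 - M'² / (2 M)`.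

If `E` is negative at some time, then `M' > 0` from then on and `E' ≤ -M'² / (2 M) < q E M' / M`
for every `q < (p + 1) / 2`, so that `-E` grows at least like `M ^ q`. Hence `M' ≥ c M ^ q`, which
for `q > 1` is impossible on an unbounded time interval. So `E ≥ 0`, and `E' ≤ -s'³ / 2` bounds the
integral of `s'³` away from `t = 0`. Near `t = 0` the barrier `N (s(t) - x)` bounds `s'`.

A solution is not regular enough for `E` to be differentiated: `∂ₜu` need not be integrable up to
the lateral boundary. The inequality for `E'` is therefore proved for lower right Dini derivatives,
by comparing `u(τ)` with `u(t)` on the fixed interval `(0, s(t))` as `τ` decreases to `t`; the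
`L²` distance of the two slices takes the role of `∂ₜu`.
-/

section ParametricIntegrals

open Function intervalIntegral

variable {E : Type*} [NormedAddCommGroup E] [NormedSpace ℝ E]

lemma continuousOn_intervalIntegral_of_continuousOn_prod {X : Type*} [TopologicalSpace X]
    {f : X → ℝ → E} {S : Set X} {a b : ℝ} (hab : a ≤ b)
    (hf : ContinuousOn (uncurry f) (S ×ˢ Icc a b)) :
    ContinuousOn (fun x => ∫ y in a..b, f x y) S := by
  rw [continuousOn_iff_continuous_domRestrict]
  have hext : Continuous (uncurry fun (x : S) (y : ℝ) => f x (projIcc a b hab y)) :=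
    hf.comp_continuous (f := fun q : S × ℝ => ((q.1 : X), (projIcc a b hab q.2 : ℝ)))
      (by fun_prop) fun q => ⟨q.1.2, (projIcc a b hab q.2).2⟩
  convert continuous_parametric_intervalIntegral_of_continuous' (μ := volume) hext a b using 2
    with x
  refine integral_congr fun y hy => ?_
  rw [uIcc_of_le hab] at hy
  simp only [projIcc_of_mem hab hy]

lemma hasDerivWithinAt_integral_Ici [CompleteSpace E] {f : ℝ → E} {a b x : ℝ}
    (hf : ContinuousOn f (Icc a b)) (hx : x ∈ Ico a b) :
    HasDerivWithinAt (fun y => ∫ z in a..y, f z) (f x) (Ici x) x := by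
  have hsub : Ioo x b ⊆ Icc a b := fun y hy => ⟨hx.1.trans hy.1.le, hy.2.le⟩
  have hIoo : Ioo x b ∈ 𝓝[>] x := Ioo_mem_nhdsGT hx.2
  refine integral_hasDerivWithinAt_right (t := Ioi x)
    ((hf.mono (Icc_subset_Icc_right hx.2.le)).intervalIntegrable_of_Icc hx.1) ?_ ?_
  · exact ⟨Ioo x b, hIoo, (hf.mono hsub).aestronglyMeasurable measurableSet_Ioo⟩
  · exact ((hf x (Ico_subset_Icc_self hx)).mono hsub).mono_of_mem_nhdsWithin hIoo

lemma hasDerivAt_intervalIntegral_of_continuousOn_prod {F F' : ℝ → ℝ → E} {a b c d x : ℝ}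
    (hab : a ≤ b) (hF : ∀ y ∈ Ioo c d, ContinuousOn (fun r => F r y) (Icc a b))
    (hF' : ContinuousOn (uncurry F') (Icc a b ×ˢ Ioo c d))
    (hderiv : ∀ r ∈ Icc a b, ∀ y ∈ Ioo c d, HasDerivAt (F r) (F' r y) y) (hx : x ∈ Ioo c d) :
    HasDerivAt (fun y => ∫ r in a..b, F r y) (∫ r in a..b, F' r x) x := by
  obtain ⟨c', d', -, hnhds, hsub⟩ := exists_Icc_mem_subset_of_mem_nhds (Ioo_mem_nhds hx.1 hx.2)
  obtain ⟨C, hC⟩ := (isCompact_Icc.prod isCompact_Icc).exists_bound_of_continuousOn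
    (hF'.mono (prod_mono_right hsub))
  have hIoc : uIoc a b ⊆ Icc a b := by rw [uIoc_of_le hab]; exact Ioc_subset_Icc_self
  refine (hasDerivAt_integral_of_dominated_loc_of_deriv_le (F := fun y r => F r y)
    (F' := fun y r => F' r y) (bound := fun _ => C) hnhds ?_ ?_ ?_ ?_ intervalIntegrable_const ?_).2
  · filter_upwards [hnhds] with y hy
    exact ((hF y (hsub hy)).mono hIoc).aestronglyMeasurable measurableSet_uIoc
  · exact (hF x hx).intervalIntegrable_of_Icc hab
  · have hslice : ContinuousOn (fun r => F' r x) (Icc a b) :=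
      hF'.comp (f := fun r : ℝ => (r, x)) (by fun_prop) fun r hr => ⟨hr, hx⟩
    exact (hslice.mono hIoc).aestronglyMeasurable measurableSet_uIoc
  · exact Eventually.of_forall fun r hr y hy => hC (r, y) ⟨hIoc hr, hy⟩
  · exact Eventually.of_forall fun r hr y hy => hderiv r (hIoc hr) y (hsub hy)

lemma continuousOn_integral_zero_moving_endpoint {G : ℝ → ℝ → ℝ} {σ : ℝ → ℝ} {S : Set ℝ}
    (hσ : ContinuousOn σ S) (hpos : ∀ t ∈ S, 0 ≤ σ t)
    (hG : ContinuousOn (uncurry G) {q | q.1 ∈ S ∧ q.2 ∈ Icc 0 (σ q.1)}) :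
    ContinuousOn (fun t => ∫ x in 0..σ t, G t x) S := by
  have hscaled : ContinuousOn (uncurry fun t y => G t (σ t * y)) (S ×ˢ Icc 0 1) := by
    refine hG.comp (f := fun q : ℝ × ℝ => (q.1, σ q.1 * q.2)) ?_ fun q hq => ⟨hq.1, ?_, ?_⟩
    · have hσfst : ContinuousOn (fun q : ℝ × ℝ => σ q.1) (S ×ˢ Icc 0 1) :=
        hσ.comp continuousOn_fst fun q hq => hq.1
      exact continuousOn_fst.prodMk (hσfst.mul continuousOn_snd)
    · exact mul_nonneg (hpos _ hq.1) hq.2.1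
    · exact mul_le_of_le_one_right (hpos _ hq.1) hq.2.2
  refine (hσ.mul (continuousOn_intervalIntegral_of_continuousOn_prod zero_le_one hscaled)).congr
    fun t _ => ?_
  simp

lemma eventually_forall_mem_uIcc_of_continuousWithinAt {Y : Type*} [TopologicalSpace Y]
    {f : ℝ × ℝ → Y} {σ : ℝ → ℝ} {S : Set ℝ} {t : ℝ} (hσ : ContinuousWithinAt σ S t)
    (hf : ContinuousWithinAt f {q | q.1 ∈ S ∧ q.2 ∈ uIcc (σ t) (σ q.1)} (t, σ t)) {O : Set Y}
    (hO : O ∈ 𝓝 (f (t, σ t))) :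
    ∀ᶠ τ in 𝓝[S] t, ∀ x ∈ uIcc (σ t) (σ τ), f (τ, x) ∈ O := by
  obtain ⟨ε, hε, hball⟩ := Metric.mem_nhdsWithin_iff.1 (hf hO)
  have htime : ∀ᶠ τ in 𝓝[S] t, dist τ t < ε :=
    nhdsWithin_le_nhds (Metric.ball_mem_nhds t hε)
  have hspace : ∀ᶠ τ in 𝓝[S] t, dist (σ τ) (σ t) < ε := hσ (Metric.ball_mem_nhds _ hε)
  filter_upwards [self_mem_nhdsWithin, htime, hspace] with τ hτS hτ hστ x hx
  refine hball ⟨max_lt hτ ?_, hτS, hx⟩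
  exact (dist_comm x _ ▸ Real.dist_left_le_of_mem_uIcc hx).trans_lt (dist_comm (σ t) _ ▸ hστ)

lemma hasDerivWithinAt_integral_moving_endpoint {G : ℝ → ℝ → ℝ} {σ : ℝ → ℝ} {S : Set ℝ}
    {t v : ℝ} (hσ : HasDerivWithinAt σ v S t)
    (hG : ContinuousWithinAt (uncurry G) {q | q.1 ∈ S ∧ q.2 ∈ uIcc (σ t) (σ q.1)} (t, σ t))
    (hint : ∀ τ ∈ S, IntervalIntegrable (G τ) volume (σ t) (σ τ)) :
    HasDerivWithinAt (fun τ => ∫ x in σ t..σ τ, G τ x) (v * G t (σ t)) S t := by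
  set c := G t (σ t)
  have herror : HasDerivWithinAt (fun τ => ∫ x in σ t..σ τ, (G τ x - c)) 0 S t := by
    rw [hasDerivWithinAt_iff_isLittleO]
    simp only [integral_same, sub_zero, smul_zero]
    refine Asymptotics.IsLittleO.trans_isBigO (Asymptotics.isLittleO_iff.2 fun ε hε => ?_)
      hσ.hasFDerivWithinAt.isBigO_sub
    filter_upwards [eventually_forall_mem_uIcc_of_continuousWithinAt hσ.continuousWithinAt hG
      (Metric.closedBall_mem_nhds _ hε)] with τ hτ
    exact norm_integral_le_of_norm_le_const fun x hx =>
      (dist_eq_norm _ _).symm.trans_le (hτ x (uIoc_subset_uIcc hx))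
  have hmain : HasDerivWithinAt (fun τ => (σ τ - σ t) * c) (v * c) S t :=
    (hσ.sub_const (σ t)).mul_const c
  refine ((herror.add hmain).congr_deriv (zero_add _)).congr (fun τ hτ => ?_) ?_
  · simp [integral_sub (hint τ hτ) intervalIntegrable_const]
  · simp

end ParametricIntegrals

section ConservationLaw

open Function intervalIntegral

/-- The conservation law `∂ₜ Z = ∂ₓ V` on the rectangle `[t₁, t₂] × [a, b]`, with `Y = ∂ₓ Z`.
All of `Z`, `Y`, `V` are continuous up to the boundary, while the common value `g` of `∂ₜ Z` and
`∂ₓ V` may be unbounded near the lateral sides `x = a` and `x = b`. -/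
structure ConservationLawOn (Z Y V g : ℝ → ℝ → ℝ) (t₁ t₂ a b : ℝ) : Prop where
  continuousOn_Z : ContinuousOn (uncurry Z) (Icc t₁ t₂ ×ˢ Icc a b)
  continuousOn_Y : ContinuousOn (uncurry Y) (Icc t₁ t₂ ×ˢ Icc a b)
  continuousOn_V : ContinuousOn (uncurry V) (Icc t₁ t₂ ×ˢ Icc a b)
  continuousOn_g : ContinuousOn (uncurry g) (Icc t₁ t₂ ×ˢ Ioo a b)
  hasDerivAt_Z : ∀ r ∈ Icc t₁ t₂, ∀ x ∈ Ioo a b, HasDerivAt (Z r) (Y r x) x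
  hasDerivAt_V : ∀ r ∈ Icc t₁ t₂, ∀ x ∈ Ioo a b, HasDerivAt (V r) (g r x) x
  hasDerivAt_time : ∀ r ∈ Icc t₁ t₂, ∀ x ∈ Ioo a b, HasDerivAt (fun τ => Z τ x) (g r x) r

/-- The rate of change of `∫ x in a..b, Z r x ^ 2 / 2` when `∂ₜ Z = ∂ₓ V` and `Y = ∂ₓ Z`, as
given by integration by parts. -/
def halfSqRate (Z Y V : ℝ → ℝ → ℝ) (a b r : ℝ) : ℝ :=
  V r b * Z r b - V r a * Z r a - ∫ x in a..b, V r x * Y r x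

namespace ConservationLawOn

variable {Z Y V g : ℝ → ℝ → ℝ} {a b t₁ t₂ : ℝ}

lemma mono_right (h : ConservationLawOn Z Y V g t₁ t₂ a b) {t₃ : ℝ} (ht : t₃ ≤ t₂) :
    ConservationLawOn Z Y V g t₁ t₃ a b := by
  have hsub : Icc t₁ t₃ ⊆ Icc t₁ t₂ := Icc_subset_Icc_right ht
  exact ⟨h.1.mono (prod_mono_left hsub), h.2.mono (prod_mono_left hsub),
    h.3.mono (prod_mono_left hsub), h.4.mono (prod_mono_left hsub),
    fun r hr => h.5 r (hsub hr), fun r hr => h.6 r (hsub hr), fun r hr => h.7 r (hsub hr)⟩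

lemma continuousOn_V_mul_Z (h : ConservationLawOn Z Y V g t₁ t₂ a b) :
    ContinuousOn (uncurry fun r x => V r x * Z r x) (Icc t₁ t₂ ×ˢ Icc a b) :=
  h.continuousOn_V.mul h.continuousOn_Z

lemma continuousOn_V_mul_Y (h : ConservationLawOn Z Y V g t₁ t₂ a b) :
    ContinuousOn (uncurry fun r x => V r x * Y r x) (Icc t₁ t₂ ×ˢ Icc a b) :=
  h.continuousOn_V.mul h.continuousOn_Y

lemma hasDerivAt_integral_V_mul_Z (h : ConservationLawOn Z Y V g t₁ t₂ a b) (ht : t₁ ≤ t₂)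
    {x : ℝ} (hx : x ∈ Ioo a b) :
    HasDerivAt (fun y => ∫ r in t₁..t₂, V r y * Z r y)
      (Z t₂ x ^ 2 / 2 - Z t₁ x ^ 2 / 2 + ∫ r in t₁..t₂, V r x * Y r x) x := by
  have hsub : Icc t₁ t₂ ×ˢ Ioo a b ⊆ Icc t₁ t₂ ×ˢ Icc a b := prod_mono_right Ioo_subset_Icc_self
  have hgZ : ContinuousOn (uncurry fun r y => g r y * Z r y) (Icc t₁ t₂ ×ˢ Ioo a b) :=
    h.continuousOn_g.mul (h.continuousOn_Z.mono hsub)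
  have hgZ_int : IntervalIntegrable (fun r => g r x * Z r x) volume t₁ t₂ :=
    (hgZ.uncurry_right x hx).intervalIntegrable_of_Icc ht
  have hVY_int : IntervalIntegrable (fun r => V r x * Y r x) volume t₁ t₂ :=
    (h.continuousOn_V_mul_Y.uncurry_right x (Ioo_subset_Icc_self hx)).intervalIntegrable_of_Icc ht
  have htime : ∫ r in t₁..t₂, g r x * Z r x = Z t₂ x ^ 2 / 2 - Z t₁ x ^ 2 / 2 := by
    refine integral_eq_sub_of_hasDerivAt (f := fun r => Z r x ^ 2 / 2) (fun r hr => ?_) hgZ_int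
    rw [uIcc_of_le ht] at hr
    exact (((h.hasDerivAt_time r hr x hx).pow 2).div_const 2).congr_deriv (by push_cast; ring)
  rw [← htime, ← integral_add hgZ_int hVY_int]
  exact hasDerivAt_intervalIntegral_of_continuousOn_prod ht
    (F' := fun r y => g r y * Z r y + V r y * Y r y)
    (fun y hy => h.continuousOn_V_mul_Z.uncurry_right y (Ioo_subset_Icc_self hy))
    (hgZ.add (h.continuousOn_V_mul_Y.mono hsub))
    (fun r hr y hy => (h.hasDerivAt_V r hr y hy).mul (h.hasDerivAt_Z r hr y hy)) hx

lemma continuousOn_halfSqRate (h : ConservationLawOn Z Y V g t₁ t₂ a b) (hab : a ≤ b) :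
    ContinuousOn (halfSqRate Z Y V a b) (Icc t₁ t₂) :=
  ((h.continuousOn_V_mul_Z.uncurry_right b (right_mem_Icc.2 hab)).sub
    (h.continuousOn_V_mul_Z.uncurry_right a (left_mem_Icc.2 hab))).sub
    (continuousOn_intervalIntegral_of_continuousOn_prod hab h.continuousOn_V_mul_Y)

lemma integral_halfSqRate (h : ConservationLawOn Z Y V g t₁ t₂ a b) (ht : t₁ ≤ t₂) (hab : a ≤ b) :
    ∫ r in t₁..t₂, halfSqRate Z Y V a b r =
      (∫ r in t₁..t₂, V r b * Z r b) - (∫ r in t₁..t₂, V r a * Z r a) -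
        ∫ x in a..b, ∫ r in t₁..t₂, V r x * Y r x := by
  have hint : ∀ x ∈ Icc a b, IntervalIntegrable (fun r => V r x * Z r x) volume t₁ t₂ :=
    fun x hx => (h.continuousOn_V_mul_Z.uncurry_right x hx).intervalIntegrable_of_Icc ht
  have hbound := (hint b (right_mem_Icc.2 hab)).sub (hint a (left_mem_Icc.2 hab))
  have hVY := (continuousOn_intervalIntegral_of_continuousOn_prod hab
    h.continuousOn_V_mul_Y).intervalIntegrable_of_Icc (μ := volume) ht
  have hfubini : ∫ r in t₁..t₂, ∫ x in a..b, V r x * Y r x =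
      ∫ x in a..b, ∫ r in t₁..t₂, V r x * Y r x := by
    refine intervalIntegral_intervalIntegral_swap (IntegrableOn.mono_set
      (h.continuousOn_V_mul_Y.integrableOn_compact (isCompact_Icc.prod isCompact_Icc)) ?_)
    rw [uIoc_of_le hab, uIoc_of_le ht]
    exact prod_mono Ioc_subset_Icc_self Ioc_subset_Icc_self
  rw [← hfubini, ← integral_sub (hint b (right_mem_Icc.2 hab)) (hint a (left_mem_Icc.2 hab)),
    ← integral_sub hbound hVY]
  rfl

lemma integral_sq_half_sub (h : ConservationLawOn Z Y V g t₁ t₂ a b) (ht : t₁ ≤ t₂) (hab : a ≤ b) :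
    (∫ x in a..b, Z t₂ x ^ 2 / 2) - ∫ x in a..b, Z t₁ x ^ 2 / 2 =
      ∫ r in t₁..t₂, halfSqRate Z Y V a b r := by
  have hinner : ∀ {f : ℝ → ℝ → ℝ}, ContinuousOn (uncurry f) (Icc t₁ t₂ ×ˢ Icc a b) →
      ContinuousOn (fun x => ∫ r in t₁..t₂, f r x) (Icc a b) := fun hf =>
    continuousOn_intervalIntegral_of_continuousOn_prod ht
      (hf.comp continuous_swap.continuousOn fun q hq => ⟨hq.2, hq.1⟩)
  have hsq : ∀ r ∈ Icc t₁ t₂, IntervalIntegrable (fun x => Z r x ^ 2 / 2) volume a b := fun r hr =>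
    (((h.continuousOn_Z.uncurry_left r hr).pow 2).div_const 2).intervalIntegrable_of_Icc hab
  have hsq₁ := hsq t₁ (left_mem_Icc.2 ht)
  have hsq₂ := hsq t₂ (right_mem_Icc.2 ht)
  have hVY := (hinner h.continuousOn_V_mul_Y).intervalIntegrable_of_Icc (μ := volume) hab
  have hparts := integral_eq_sub_of_hasDerivAt_of_le hab (hinner h.continuousOn_V_mul_Z)
    (fun x hx => h.hasDerivAt_integral_V_mul_Z ht hx) ((hsq₂.sub hsq₁).add hVY)
  rw [integral_add (hsq₂.sub hsq₁) hVY, integral_sub hsq₂ hsq₁] at hparts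
  rw [h.integral_halfSqRate ht hab]
  linarith

lemma hasDerivWithinAt_integral_sq_half (h : ConservationLawOn Z Y V g t₁ t₂ a b) (hab : a ≤ b)
    {r : ℝ} (hr : r ∈ Ico t₁ t₂) :
    HasDerivWithinAt (fun τ => ∫ x in a..b, Z τ x ^ 2 / 2) (halfSqRate Z Y V a b r) (Ici r) r := by
  have hftc := (hasDerivWithinAt_integral_Ici (h.continuousOn_halfSqRate hab) hr).add_const
    (∫ x in a..b, Z t₁ x ^ 2 / 2)
  have hident : ∀ τ ∈ Icc t₁ t₂, ∫ x in a..b, Z τ x ^ 2 / 2 =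
      (∫ ρ in t₁..τ, halfSqRate Z Y V a b ρ) + ∫ x in a..b, Z t₁ x ^ 2 / 2 := fun τ hτ => by
    rw [← sub_eq_iff_eq_add]
    exact (h.mono_right hτ.2).integral_sq_half_sub hτ.1 hab
  refine hftc.congr_of_eventuallyEq ?_ (hident r (Ico_subset_Icc_self hr))
  filter_upwards [Ico_mem_nhdsGE hr.2] with τ hτ using hident τ ⟨hr.1.trans hτ.1, hτ.2.le⟩

lemma continuousOn_integral_sq_half (h : ConservationLawOn Z Y V g t₁ t₂ a b) (hab : a ≤ b) :
    ContinuousOn (fun τ => ∫ x in a..b, Z τ x ^ 2 / 2) (Icc t₁ t₂) :=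
  continuousOn_intervalIntegral_of_continuousOn_prod hab
    (f := fun τ x => Z τ x ^ 2 / 2) ((h.continuousOn_Z.pow 2).div_const 2)

end ConservationLawOn

end ConservationLaw

section ElementaryInequalities

open intervalIntegral

lemma sq_left_endpoint_le_integral_sq_deriv_add_integral_sq {a b l : ℝ} (hab : a < b) (hl : 0 < l)
    {y y' : ℝ → ℝ} (hy : ContinuousOn y (Icc a b)) (hy' : ContinuousOn y' (Icc a b))
    (hderiv : ∀ x ∈ Ioo a b, HasDerivAt y (y' x) x) :
    y a ^ 2 ≤ l * (∫ x in a..b, y' x ^ 2) + (1 / (b - a) + 1 / l) * ∫ x in a..b, y x ^ 2 := by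
  have hba : 0 < b - a := sub_pos.2 hab
  have hweight : ∫ x in a..b, (y x ^ 2 / (b - a) - 2 * ((b - x) / (b - a)) * (y x * y' x)) =
      y a ^ 2 := by
    have hparts := integral_eq_sub_of_hasDerivAt_of_le hab.le
      (f := fun x => -((b - x) / (b - a) * y x ^ 2))
      (f' := fun x => y x ^ 2 / (b - a) - 2 * ((b - x) / (b - a)) * (y x * y' x)) (by fun_prop)
      (fun x hx => ((((hasDerivAt_id x).const_sub b).div_const (b - a)).mul
        ((hderiv x hx).pow 2)).neg.congr_deriv (by simp; ring))
      (ContinuousOn.intervalIntegrable_of_Icc hab.le (by fun_prop))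
    rw [hparts]
    simp [hba.ne']
  rw [← hweight, ← intervalIntegral.integral_const_mul, ← intervalIntegral.integral_const_mul,
    ← integral_add (ContinuousOn.intervalIntegrable_of_Icc hab.le (by fun_prop))
      (ContinuousOn.intervalIntegrable_of_Icc hab.le (by fun_prop))]
  refine integral_mono_on hab.le (ContinuousOn.intervalIntegrable_of_Icc hab.le (by fun_prop))
    (ContinuousOn.intervalIntegrable_of_Icc hab.le (by fun_prop)) fun x hx => ?_
  have hk₀ : 0 ≤ (b - x) / (b - a) := div_nonneg (sub_nonneg.2 hx.2) hba.le
  have hk₁ : (b - x) / (b - a) ≤ 1 := (div_le_one hba).2 (by linarith [hx.1])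
  generalize (b - x) / (b - a) = k at hk₀ hk₁
  have hsquares : l * y' x ^ 2 + (1 / (b - a) + 1 / l) * y x ^ 2 -
      (y x ^ 2 / (b - a) - 2 * k * (y x * y' x)) =
      1 / l * ((l * y' x + k * y x) ^ 2 + (1 - k) * (1 + k) * y x ^ 2) := by
    field_simp
    ring
  have := mul_nonneg (sub_nonneg.2 hk₁) (by linarith : 0 ≤ 1 + k)
  rw [← sub_nonneg, hsquares]
  positivity

lemma rpow_mul_sub_le {p a c : ℝ} (hp : 0 < p) (ha : 0 ≤ a) (hc : 0 ≤ c) :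
    c ^ p * (a - c) ≤ (a ^ (p + 1) - c ^ (p + 1)) / (p + 1) := by
  have hconj : (p + 1).HolderConjugate ((p + 1) / p) := by
    rw [Real.holderConjugate_iff]
    exact ⟨by linarith, by field_simp; ring⟩
  have hyoung := Real.young_inequality_of_nonneg ha (Real.rpow_nonneg hc p) hconj
  rw [← Real.rpow_mul hc, mul_div_cancel₀ _ hp.ne'] at hyoung
  have hsplit : c ^ (p + 1) / ((p + 1) / p) = c ^ (p + 1) - c ^ (p + 1) / (p + 1) := by
    field_simp
    ring
  rw [hsplit] at hyoung
  rw [sub_div, mul_sub, ← Real.rpow_add_one' hc (by positivity)]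
  linarith

lemma abs_rpow_sub_rpow_le {p a c L : ℝ} (hp : 1 ≤ p) (ha : a ∈ Icc 0 L) (hc : c ∈ Icc 0 L) :
    |a ^ p - c ^ p| ≤ p * L ^ (p - 1) * |a - c| := by
  refine (convex_Icc 0 L).norm_image_sub_le_of_norm_deriv_le (f := fun x : ℝ => x ^ p)
    (fun x _ => (Real.hasDerivAt_rpow_const (Or.inr hp)).differentiableAt) (fun x hx => ?_) hc ha
  rw [Real.deriv_rpow_const, norm_mul, Real.norm_of_nonneg (by linarith),
    Real.norm_of_nonneg (Real.rpow_nonneg hx.1 _)]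
  have := Real.rpow_le_rpow hx.1 hx.2 (sub_nonneg.2 hp)
  gcongr

lemma rpow_mul_sub_sub_le {p a c L : ℝ} (hp : 1 ≤ p) (ha : a ∈ Icc 0 L) (hc : c ∈ Icc 0 L) :
    a ^ p * (a - c) - (a ^ (p + 1) - c ^ (p + 1)) / (p + 1) ≤ p * L ^ (p - 1) * (a - c) ^ 2 := by
  have hlip : (a ^ p - c ^ p) * (a - c) ≤ p * L ^ (p - 1) * (a - c) ^ 2 :=
    calc (a ^ p - c ^ p) * (a - c) ≤ |a ^ p - c ^ p| * |a - c| := by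
          rw [← abs_mul]; exact le_abs_self _
      _ ≤ p * L ^ (p - 1) * |a - c| * |a - c| := by gcongr; exact abs_rpow_sub_rpow_le hp ha hc
      _ = p * L ^ (p - 1) * (a - c) ^ 2 := by rw [mul_assoc, ← sq, sq_abs]
  linarith [rpow_mul_sub_le (by linarith : 0 < p) ha.1 hc.1]

lemma integral_sq_half_sub_le {y z : ℝ → ℝ} {a b q : ℝ} (hab : a ≤ b) (hq : 0 < q)
    (hy : ContinuousOn y (Icc a b)) (hz : ContinuousOn z (Icc a b)) :
    (∫ x in a..b, y x ^ 2 / 2) - ∫ x in a..b, z x ^ 2 / 2 ≤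
      q * (∫ x in a..b, z x ^ 2 / 2) + (1 / q + 1) * ∫ x in a..b, (y x - z x) ^ 2 / 2 := by
  have hint : ∀ {f : ℝ → ℝ}, ContinuousOn f (Icc a b) → IntervalIntegrable f volume a b :=
    fun hf => hf.intervalIntegrable_of_Icc hab
  rw [← intervalIntegral.integral_const_mul, ← intervalIntegral.integral_const_mul,
    ← integral_sub (hint (by fun_prop)) (hint (by fun_prop)),
    ← integral_add (hint (by fun_prop)) (hint (by fun_prop))]
  refine integral_mono_on hab (hint (by fun_prop)) (hint (by fun_prop)) fun x _ => ?_
  have hsquare : q * (z x ^ 2 / 2) + (1 / q + 1) * ((y x - z x) ^ 2 / 2) -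
      (y x ^ 2 / 2 - z x ^ 2 / 2) = (q * z x - (y x - z x)) ^ 2 / (2 * q) := by
    field_simp
    ring
  rw [← sub_nonneg, hsquare]
  positivity

end ElementaryInequalities

section DifferentialInequalities

lemma le_mul_sq_of_rightDeriv_le {F f : ℝ → ℝ} {t z K C k : ℝ}
    (hF : ContinuousOn F (Icc t z)) (hF' : ∀ τ ∈ Ico t z, HasDerivWithinAt F (f τ) (Ici τ) τ)
    (hFt : F t ≤ 0) (hft : f t ≤ 0) (hf : ∀ τ ∈ Ioo t z, f τ ≤ K * (τ - t) + C * F τ)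
    (hquad : ∀ τ ∈ Ioo t z, K + C * k * (τ - t) < 2 * k) (hlin : ∀ τ ∈ Ioo t z, C * (τ - t) < 1)
    {τ : ℝ} (hτ : τ ∈ Icc t z) : F τ ≤ k * (τ - t) ^ 2 := by
  have hperturbed : ∀ ε > 0, F τ ≤ k * (τ - t) ^ 2 + ε * (τ - t) := by
    intro ε hε
    have hB : ∀ ρ, HasDerivAt (fun ρ => k * (ρ - t) ^ 2 + ε * (ρ - t))
        (2 * k * (ρ - t) + ε) ρ := fun ρ => by
      have hsub := (hasDerivAt_id ρ).sub_const t
      exact (((hsub.pow 2).const_mul k).add (hsub.const_mul ε)).congr_deriv (by simp; ring)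
    refine image_le_of_deriv_right_lt_deriv_boundary hF hF' (by simpa using hFt) hB
      (fun ρ hρ hFB => ?_) hτ
    rcases hρ.1.eq_or_lt with rfl | hlt
    · simpa using hft.trans_lt hε
    · have hfρ := hf ρ ⟨hlt, hρ.2⟩
      rw [hFB] at hfρ
      nlinarith [mul_pos (sub_pos.2 (hquad ρ ⟨hlt, hρ.2⟩)) (sub_pos.2 hlt),
        mul_pos (sub_pos.2 (hlin ρ ⟨hlt, hρ.2⟩)) hε]
  have hlim : Tendsto (fun ε => k * (τ - t) ^ 2 + ε * (τ - t)) (𝓝[>] 0) (𝓝 (k * (τ - t) ^ 2)) :=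
    ((by fun_prop : Continuous fun ε => k * (τ - t) ^ 2 + ε * (τ - t)).tendsto' 0 _
      (by simp)).mono_left nhdsWithin_le_nhds
  exact ge_of_tendsto hlim (eventually_mem_nhdsWithin.mono hperturbed)

lemma eventually_lt_mul_sq_of_rightDeriv_le {F f : ℝ → ℝ} {t b K C k : ℝ} (htb : t < b)
    (hF : ContinuousOn F (Icc t b)) (hF' : ∀ τ ∈ Ico t b, HasDerivWithinAt F (f τ) (Ici τ) τ)
    (hFt : F t ≤ 0) (hft : f t ≤ 0) (hf : ∀ᶠ τ in 𝓝[>] t, f τ ≤ K * (τ - t) + C * F τ)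
    (hK : K < 2 * k) : ∀ᶠ τ in 𝓝[>] t, F τ < k * (τ - t) ^ 2 := by
  obtain ⟨k', hKk', hk'k⟩ : ∃ k', K < 2 * k' ∧ k' < k :=
    ⟨(K / 2 + k) / 2, by linarith, by linarith⟩
  have hsmall : ∀ m : ℝ, Tendsto (fun τ => m * (τ - t)) (𝓝[>] t) (𝓝 0) := fun m =>
    ((by fun_prop : Continuous fun τ => m * (τ - t)).tendsto' t 0 (by simp)).mono_left
      nhdsWithin_le_nhds
  obtain ⟨z, hz, hgood⟩ := mem_nhdsGT_iff_exists_Ioc_subset.1 (hf.and <|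
    ((hsmall (C * k')).eventually (gt_mem_nhds (sub_pos.2 hKk'))).and <|
    ((hsmall C).eventually (gt_mem_nhds one_pos)).and (Ioo_mem_nhdsGT htb))
  have hzb : z ≤ b := (hgood ⟨hz, le_rfl⟩).2.2.2.2.le
  have hIoc : ∀ {τ}, τ ∈ Ioo t z → τ ∈ Ioc t z := fun hτ => Ioo_subset_Ioc_self hτ
  filter_upwards [Ioc_mem_nhdsGT hz] with τ hτ
  calc F τ ≤ k' * (τ - t) ^ 2 :=
        le_mul_sq_of_rightDeriv_le (hF.mono (Icc_subset_Icc_right hzb))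
          (fun ρ hρ => hF' ρ ⟨hρ.1, hρ.2.trans_le hzb⟩) hFt hft
          (fun ρ hρ => (hgood (hIoc hρ)).1)
          (fun ρ hρ => by linarith [(hgood (hIoc hρ)).2.1])
          (fun ρ hρ => (hgood (hIoc hρ)).2.2.1) (Ioc_subset_Icc_self hτ)
    _ < k * (τ - t) ^ 2 := by
        have : 0 < τ - t := sub_pos.2 hτ.1
        gcongr

/- The choice `q = m / (2 * M) * (τ - t)` makes both terms of the bound on `I` of the same order. -/
lemma eventually_mul_sq_le_of_hasDerivWithinAt {I F : ℝ → ℝ} {t m M k : ℝ}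
    (hI : HasDerivWithinAt I m (Ici t) t) (hIt : I t = 0) (hm : 0 < m) (hM : 0 < M)
    (hIF : ∀ᶠ τ in 𝓝[>] t, ∀ q > 0, I τ ≤ q * M + (1 / q + 1) * F τ)
    (hk : k < m ^ 2 / (4 * M)) : ∀ᶠ τ in 𝓝[>] t, k * (τ - t) ^ 2 ≤ F τ := by
  set θ := m / (2 * M) with hθ
  have hθ_pos : 0 < θ := by positivity
  have hslope : Tendsto (fun τ => I τ / (τ - t)) (𝓝[>] t) (𝓝 m) := by
    refine ((hasDerivWithinAt_iff_tendsto_slope' self_notMem_Ioi).1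
      (hasDerivWithinAt_Ioi_iff_Ici.2 hI)).congr fun τ => ?_
    rw [slope_def_field, hIt, sub_zero]
  have hlim : Tendsto (fun τ => θ * (I τ / (τ - t) - θ * M) - k * (1 + θ * (τ - t))) (𝓝[>] t)
      (𝓝 (θ * (m - θ * M) - k * (1 + θ * 0))) := by
    have hsub : Tendsto (fun τ => τ - t) (𝓝[>] t) (𝓝 0) :=
      ((by fun_prop : Continuous fun τ => τ - t).tendsto' t 0 (by simp)).mono_left
        nhdsWithin_le_nhds
    exact ((hslope.sub_const _).const_mul _).sub (((hsub.const_mul _).const_add 1).const_mul _)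
  have hlim_pos : 0 < θ * (m - θ * M) - k * (1 + θ * 0) := by
    have : θ * (m - θ * M) = m ^ 2 / (4 * M) := by rw [hθ]; field_simp; ring
    linarith
  filter_upwards [hIF, hlim.eventually (lt_mem_nhds hlim_pos), self_mem_nhdsWithin]
    with τ hIFτ hpos hτ
  have hd : 0 < τ - t := sub_pos.2 hτ
  generalize τ - t = d at hd hpos ⊢
  have hq : 0 < θ * d := by positivity
  have hupper : θ * d * I τ ≤ (θ * d) ^ 2 * M + (1 + θ * d) * F τ := by
    calc θ * d * I τ ≤ θ * d * (θ * d * M + (1 / (θ * d) + 1) * F τ) := by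
          gcongr; exact hIFτ _ hq
      _ = (θ * d) ^ 2 * M + (1 + θ * d) * F τ := by field_simp
  have hlower : 0 ≤ θ * d * I τ - (θ * d) ^ 2 * M - k * (1 + θ * d) * d ^ 2 := by
    calc 0 ≤ (θ * (I τ / d - θ * M) - k * (1 + θ * d)) * d ^ 2 := by positivity
      _ = θ * d * I τ - (θ * d) ^ 2 * M - k * (1 + θ * d) * d ^ 2 := by field_simp
  have hmul : k * d ^ 2 * (1 + θ * d) ≤ F τ * (1 + θ * d) := by linarith
  exact le_of_mul_le_mul_right hmul (by positivity)

lemma mul_sub_lt_rpow_of_mul_rpow_le_rightDeriv {M m : ℝ → ℝ} {t₀ T c q : ℝ} (hT : t₀ ≤ T)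
    (hq : 1 ≤ q) (hM : ContinuousOn M (Icc t₀ T))
    (hM' : ∀ t ∈ Ico t₀ T, HasDerivWithinAt M (m t) (Ici t) t) (hpos : ∀ t ∈ Icc t₀ T, 0 < M t)
    (hm : ∀ t ∈ Ico t₀ T, c * M t ^ q ≤ m t) :
    (q - 1) * c * (T - t₀) < M t₀ ^ (1 - q) := by
  have hlin : ∀ t, HasDerivAt (fun t => M t₀ ^ (1 - q) - (q - 1) * c * (t - t₀))
      (-((q - 1) * c)) t := fun t => by
    simpa using (((hasDerivAt_id t).sub_const t₀).const_mul ((q - 1) * c)).const_sub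
      (M t₀ ^ (1 - q))
  have hle := image_le_of_deriv_right_le_deriv_boundary (f := fun t => M t ^ (1 - q))
    (hM.rpow_const fun t ht => Or.inl (hpos t ht).ne')
    (fun t ht => (hM' t ht).rpow_const (Or.inl (hpos t (Ico_subset_Icc_self ht)).ne'))
    (by simp) (fun t _ => (hlin t).continuousAt.continuousWithinAt)
    (fun t _ => (hlin t).hasDerivWithinAt) (fun t ht => ?_) (right_mem_Icc.2 hT)
  · linarith [Real.rpow_pos_of_pos (hpos T (right_mem_Icc.2 hT)) (1 - q)]
  · have hMt := hpos t (Ico_subset_Icc_self ht)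
    have hc : c ≤ m t * M t ^ (1 - q - 1) := by
      rw [show 1 - q - 1 = -q by ring, Real.rpow_neg hMt.le, ← div_eq_mul_inv,
        le_div_iff₀ (Real.rpow_pos_of_pos hMt q)]
      exact hm t ht
    nlinarith

end DifferentialInequalities

section MaximumPrinciple

variable {f σ : ℝ → ℝ} {Z Zt : ℝ → ℝ → ℝ} {S : Set ℝ} {a b t v x : ℝ}

lemma deriv_deriv_nonpos_of_isLocalMax (hf : ContinuousAt f x) (hmax : IsLocalMax f x) :
    deriv (deriv f) x ≤ 0 := by
  by_contra! hpos
  have hmin : IsLocalMin f x := isLocalMin_of_deriv_deriv_pos hpos hmax.deriv_eq_zero hf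
  have hconst : f =ᶠ[𝓝 x] fun _ => f x := by
    filter_upwards [hmax, hmin] with y hle hge using le_antisymm hle hge
  have hzero : deriv (deriv f) x = 0 := by
    rw [hconst.deriv.deriv_eq]
    simp only [deriv_const', deriv_const]
  exact hpos.ne' hzero

lemma nonneg_of_hasDerivAt_of_eventually_le_left (hf : HasDerivAt f v t)
    (hle : ∀ᶠ τ in 𝓝[<] t, f τ ≤ f t) : 0 ≤ v := by
  have hslope : Tendsto (slope f t) (𝓝[<] t) (𝓝 v) :=
    (hasDerivWithinAt_iff_tendsto_slope' self_notMem_Iio).1 hf.hasDerivWithinAt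
  refine ge_of_tendsto hslope ?_
  filter_upwards [hle, self_mem_nhdsWithin] with τ hτ (hlt : τ < t)
  rw [slope_def_field]
  exact div_nonneg_of_nonpos (sub_nonpos.2 hτ) (sub_nonpos.2 hlt.le)

lemma isCompact_setOf_mem_Icc_zero (hS : IsCompact S) (hσ : ContinuousOn σ S)
    (hpos : ∀ t ∈ S, 0 < σ t) : IsCompact {q : ℝ × ℝ | q.1 ∈ S ∧ q.2 ∈ Icc 0 (σ q.1)} := by
  have himage : (fun q : ℝ × ℝ => (q.1, σ q.1 * q.2)) '' (S ×ˢ Icc 0 1) =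
      {q | q.1 ∈ S ∧ q.2 ∈ Icc 0 (σ q.1)} := by
    ext ⟨t, x⟩
    constructor
    · rintro ⟨⟨t, y⟩, ⟨ht, hy⟩, ⟨⟩⟩
      exact ⟨ht, mul_nonneg (hpos t ht).le hy.1, mul_le_of_le_one_right (hpos t ht).le hy.2⟩
    · rintro ⟨ht, hx⟩
      have hσt : 0 < σ t := hpos t ht
      exact ⟨(t, x / σ t), ⟨ht, div_nonneg hx.1 hσt.le, (div_le_one hσt).2 hx.2⟩,
        Prod.ext rfl (mul_div_cancel₀ x hσt.ne')⟩
  rw [← himage]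
  refine (hS.prod isCompact_Icc).image_of_continuousOn (continuousOn_fst.prodMk ?_)
  exact (hσ.comp continuousOn_fst fun q hq => hq.1).mul continuousOn_snd

lemma nonpos_of_strict_heat_subsolution (hσ : ContinuousOn σ (Icc a b))
    (hpos : ∀ t ∈ Icc a b, 0 < σ t)
    (hZ : ContinuousOn (Function.uncurry Z) {q | q.1 ∈ Icc a b ∧ q.2 ∈ Icc 0 (σ q.1)})
    (hZt : ∀ t ∈ Ioc a b, ∀ x ∈ Ioo 0 (σ t), HasDerivAt (fun τ => Z τ x) (Zt t x) t)
    (hsub : ∀ t ∈ Ioc a b, ∀ x ∈ Ioo 0 (σ t), Zt t x < deriv (deriv (Z t)) x)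
    (hinit : ∀ x ∈ Icc 0 (σ a), Z a x ≤ 0) (hleft : ∀ t ∈ Ioc a b, Z t 0 ≤ 0)
    (hright : ∀ t ∈ Ioc a b, Z t (σ t) ≤ 0) (ht : t ∈ Icc a b) (hx : x ∈ Icc 0 (σ t)) :
    Z t x ≤ 0 := by
  obtain ⟨⟨t₁, x₁⟩, ⟨ht₁, hx₁⟩, hmax⟩ :=
    (isCompact_setOf_mem_Icc_zero isCompact_Icc hσ hpos).exists_isMaxOn ⟨(t, x), ht, hx⟩ hZ
  have hmax' : ∀ τ ∈ Icc a b, ∀ y ∈ Icc 0 (σ τ), Z τ y ≤ Z t₁ x₁ :=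
    fun τ hτ y hy => hmax (show (τ, y) ∈ {q : ℝ × ℝ | q.1 ∈ Icc a b ∧ q.2 ∈ Icc 0 (σ q.1)}
      from ⟨hτ, hy⟩)
  refine (hmax' t ht x hx).trans ?_
  obtain rfl | hat : a = t₁ ∨ a < t₁ := ht₁.1.eq_or_lt
  · exact hinit x₁ hx₁
  obtain rfl | hx₁0 : 0 = x₁ ∨ 0 < x₁ := hx₁.1.eq_or_lt
  · exact hleft t₁ ⟨hat, ht₁.2⟩
  obtain rfl | hx₁σ : x₁ = σ t₁ ∨ x₁ < σ t₁ := hx₁.2.eq_or_lt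
  · exact hright t₁ ⟨hat, ht₁.2⟩
  have hslice : ContinuousOn (Z t₁) (Icc 0 (σ t₁)) :=
    hZ.comp (f := fun y => (t₁, y)) (by fun_prop) fun y hy => ⟨ht₁, hy⟩
  have hlocal : IsLocalMax (Z t₁) x₁ := by
    filter_upwards [Icc_mem_nhds hx₁0 hx₁σ] with y hy using hmax' t₁ ht₁ y hy
  have hxx : deriv (deriv (Z t₁)) x₁ ≤ 0 :=
    deriv_deriv_nonpos_of_isLocalMax (hslice.continuousAt (Icc_mem_nhds hx₁0 hx₁σ)) hlocal
  have hσt₁ : ContinuousWithinAt σ (Iio t₁) t₁ :=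
    (hσ t₁ ht₁).mono_of_mem_nhdsWithin <|
      mem_of_superset (Ioo_mem_nhdsLT hat) fun τ hτ => ⟨hτ.1.le, hτ.2.le.trans ht₁.2⟩
  have htime : 0 ≤ Zt t₁ x₁ := by
    refine nonneg_of_hasDerivAt_of_eventually_le_left
      (hZt t₁ ⟨hat, ht₁.2⟩ x₁ ⟨hx₁0, hx₁σ⟩) ?_
    filter_upwards [hσt₁.eventually (lt_mem_nhds hx₁σ), Ioo_mem_nhdsLT hat] with τ hxτ hτ
    exact hmax' τ ⟨hτ.1.le, hτ.2.le.trans ht₁.2⟩ x₁ ⟨hx₁0.le, hxτ.le⟩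
  exact absurd (hsub t₁ ⟨hat, ht₁.2⟩ x₁ ⟨hx₁0, hx₁σ⟩) (hxx.trans htime).not_gt

end MaximumPrinciple

namespace IsSolOn

variable {p s₀ T t τ x : ℝ} {φ s : ℝ → ℝ} {u : ℝ → ℝ → ℝ}

section Slices

lemma hasDerivAt_slice (h : IsSolOn p s₀ φ T s u) (ht : t ∈ Ioc 0 T) (hx : x ∈ Ioo 0 (s t)) :
    HasDerivAt (u t) (deriv (u t) x) x :=
  (h.ux_diff t ht x hx).hasDerivAt

lemma hasDerivAt_deriv_slice (h : IsSolOn p s₀ φ T s u) (ht : t ∈ Ioc 0 T)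
    (hx : x ∈ Ioo 0 (s t)) : HasDerivAt (deriv (u t)) (deriv (deriv (u t)) x) x :=
  (h.uxx_diff t ht x hx).hasDerivAt

lemma hasDerivAt_time (h : IsSolOn p s₀ φ T s u) (ht : t ∈ Ioc 0 T) (hx : x ∈ Ioo 0 (s t)) :
    HasDerivAt (fun τ => u τ x) (deriv (deriv (u t)) x) t :=
  h.heat t ht x hx ▸ (h.ut_diff t ht x hx).hasDerivAt

lemma continuousOn_slice (h : IsSolOn p s₀ φ T s u) (ht : t ∈ Icc 0 T) :
    ContinuousOn (u t) (Icc 0 (s t)) :=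
  h.u_cont.comp (f := fun x => (t, x)) (by fun_prop) fun _ hx => ⟨ht, hx⟩

lemma continuousOn_deriv_slice (h : IsSolOn p s₀ φ T s u) (ht : t ∈ Ioc 0 T) :
    ContinuousOn (deriv (u t)) (Icc 0 (s t)) :=
  h.ux_cont.comp (f := fun x => (t, x)) (by fun_prop) fun _ hx => ⟨ht, hx⟩

lemma continuousOn_boundary_value (h : IsSolOn p s₀ φ T s u) :
    ContinuousOn (fun t => u t 0) (Icc 0 T) :=
  h.u_cont.comp (f := fun t => (t, (0 : ℝ))) (by fun_prop)
    fun t ht => ⟨ht, le_rfl, (h.s_pos t ht).le⟩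

lemma boundary_value_nonneg (h : IsSolOn p s₀ φ T s u) (ht : t ∈ Icc 0 T) : 0 ≤ u t 0 :=
  h.u_nonneg t ht 0 ⟨le_rfl, (h.s_pos t ht).le⟩

lemma exists_boundary_value_le (h : IsSolOn p s₀ φ T s u) : ∃ L, ∀ t ∈ Icc 0 T, u t 0 ≤ L := by
  obtain ⟨L, hL⟩ := isCompact_Icc.bddAbove_image h.continuousOn_boundary_value
  exact ⟨L, fun t ht => hL ⟨t, ht, rfl⟩⟩

lemma deriv_slice_zero (h : IsSolOn p s₀ φ T s u) (ht : t ∈ Ioc 0 T) :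
    deriv (u t) 0 = -u t 0 ^ p := by
  rw [← h.bc_zero t ht, neg_neg]

lemma deriv_slice_front (h : IsSolOn p s₀ φ T s u) (ht : t ∈ Ioc 0 T) :
    deriv (u t) (s t) = -deriv s t := by
  rw [h.stefan t ht, neg_neg]

end Slices

section FreeBoundary

lemma hasDerivWithinAt_front (h : IsSolOn p s₀ φ T s u) (ht : t ∈ Ioc 0 T) :
    HasDerivWithinAt (u t) (-deriv s t) (Iic (s t)) (s t) := by
  have hst : 0 < s t := h.s_pos t (Ioc_subset_Icc_self ht)
  have hmem : s t ∈ Icc 0 (s t) := right_mem_Icc.2 hst.le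
  refine hasDerivWithinAt_Iic_of_tendsto_deriv (s := Ioo 0 (s t))
    (fun x hx => (h.ux_diff t ht x hx).differentiableWithinAt)
    ((h.continuousOn_slice (Ioc_subset_Icc_self ht) _ hmem).mono Ioo_subset_Icc_self)
    (Ioo_mem_nhdsLT hst) ?_
  rw [← h.deriv_slice_front ht, ← nhdsWithin_Ioo_eq_nhdsLT hst]
  exact (h.continuousOn_deriv_slice ht _ hmem).mono Ioo_subset_Icc_self

lemma tendsto_div_front (h : IsSolOn p s₀ φ T s u) (ht : t ∈ Ioc 0 T) :
    Tendsto (fun x => u t x / (s t - x)) (𝓝[<] s t) (𝓝 (deriv s t)) := by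
  have hslope := ((hasDerivWithinAt_iff_tendsto_slope' self_notMem_Iio).1
    (h.hasDerivWithinAt_front ht).Iio_of_Iic).neg
  rw [neg_neg] at hslope
  refine hslope.congr fun x => ?_
  rw [slope_def_field, h.bc_free t ht, sub_zero, ← div_neg, neg_sub]

lemma deriv_front_le (h : IsSolOn p s₀ φ T s u) (ht : t ∈ Ioc 0 T) {N : ℝ}
    (hN : ∀ x ∈ Ioo 0 (s t), u t x ≤ N * (s t - x)) : deriv s t ≤ N := by
  refine le_of_tendsto (h.tendsto_div_front ht) ?_
  filter_upwards [Ioo_mem_nhdsLT (h.s_pos t (Ioc_subset_Icc_self ht))] with x hx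
  exact (div_le_iff₀ (sub_pos.2 hx.2)).2 (hN x hx)

lemma deriv_front_nonneg (h : IsSolOn p s₀ φ T s u) (ht : t ∈ Ioc 0 T) : 0 ≤ deriv s t := by
  refine ge_of_tendsto (h.tendsto_div_front ht) ?_
  filter_upwards [Ioo_mem_nhdsLT (h.s_pos t (Ioc_subset_Icc_self ht))] with x hx
  exact div_nonneg (h.u_nonneg t (Ioc_subset_Icc_self ht) x (Ioo_subset_Icc_self hx))
    (sub_nonneg.2 hx.2.le)

lemma monotoneOn_front (h : IsSolOn p s₀ φ T s u) : MonotoneOn s (Icc 0 T) := by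
  refine monotoneOn_of_deriv_nonneg (convex_Icc 0 T) h.s_cont ?_ ?_ <;> rw [interior_Icc]
  · exact fun t ht => (h.s_diff t (Ioo_subset_Ioc_self ht)).differentiableWithinAt
  · exact fun t ht => h.deriv_front_nonneg (Ioo_subset_Ioc_self ht)

lemma front_le_front (h : IsSolOn p s₀ φ T s u) (ht : t ∈ Ioc 0 T) (hτ : τ ∈ Icc t T) :
    s t ≤ s τ :=
  h.monotoneOn_front (Ioc_subset_Icc_self ht) ⟨ht.1.le.trans hτ.1, hτ.2⟩ hτ.1

end FreeBoundary

section SpeedBound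

variable {K N ε : ℝ}

lemma deriv_deriv_barrier (h : IsSolOn p s₀ φ T s u) (ht : t ∈ Ioc 0 T) (hx : x ∈ Ioo 0 (s t)) :
    deriv (deriv fun y => u t y - N * (s t - y) - ε * t) x = deriv (deriv (u t)) x := by
  have hderiv : deriv (fun y => u t y - N * (s t - y) - ε * t) =ᶠ[𝓝 x]
      fun y => deriv (u t) y + N := by
    filter_upwards [Ioo_mem_nhds hx.1 hx.2] with y hy
    refine HasDerivAt.deriv ((((h.hasDerivAt_slice ht hy).sub
      (((hasDerivAt_id y).const_sub (s t)).const_mul N)).sub_const (ε * t)).congr_deriv ?_)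
    ring
  rw [hderiv.deriv_eq]
  exact ((h.hasDerivAt_deriv_slice ht hx).add_const N).deriv

lemma le_mul_sub_front_add (h : IsSolOn p s₀ φ T s u) (hφ : ∀ x ∈ Icc 0 s₀, φ x ≤ N * (s₀ - x))
    (hN : ∀ t ∈ Icc 0 T, u t 0 ≤ N * s₀) (hε : 0 < ε) (ht : t ∈ Icc 0 T) (hx : x ∈ Icc 0 (s t)) :
    u t x ≤ N * (s t - x) + ε * t := by
  suffices hbarrier : u t x - N * (s t - x) - ε * t ≤ 0 by linarith
  have hT : (0 : ℝ) ∈ Icc 0 T := left_mem_Icc.2 h.T_pos.le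
  have hs₀ : 0 < s₀ := h.init_s ▸ h.s_pos 0 hT
  have hN₀ : 0 ≤ N := nonneg_of_mul_nonneg_left ((h.boundary_value_nonneg hT).trans (hN 0 hT)) hs₀
  refine nonpos_of_strict_heat_subsolution (a := 0) (b := T)
    (Z := fun t x => u t x - N * (s t - x) - ε * t)
    (Zt := fun t x => deriv (deriv (u t)) x - N * deriv s t - ε) h.s_cont h.s_pos ?_
    (fun t ht x hx => ?_) (fun t ht x hx => ?_) (fun x hx => ?_) (fun t ht => ?_)
    (fun t ht => ?_) ht hx
  · have hs : ContinuousOn (fun q : ℝ × ℝ => s q.1)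
        {q | q.1 ∈ Icc 0 T ∧ q.2 ∈ Icc 0 (s q.1)} :=
      h.s_cont.comp continuousOn_fst fun q hq => hq.1
    exact (h.u_cont.sub (continuousOn_const.mul (hs.sub continuousOn_snd))).sub
      (continuousOn_const.mul continuousOn_fst)
  · exact (((h.hasDerivAt_time ht hx).sub
      (((h.s_diff t ht).hasDerivAt.sub_const x).const_mul N)).sub
        ((hasDerivAt_id t).const_mul ε)).congr_deriv (by ring)
  · rw [h.deriv_deriv_barrier ht hx]
    linarith [mul_nonneg hN₀ (h.deriv_front_nonneg ht)]
  · rw [h.init_s] at hx ⊢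
    rw [h.init x hx, mul_zero, sub_zero]
    exact sub_nonpos.2 (hφ x hx)
  · have hs : s₀ ≤ s t := h.init_s ▸ h.monotoneOn_front hT (Ioc_subset_Icc_self ht) ht.1.le
    have hNs : N * s₀ ≤ N * s t := by gcongr
    rw [sub_zero]
    linarith [hN t (Ioc_subset_Icc_self ht), mul_pos hε ht.1]
  · rw [h.bc_free t ht, sub_self, mul_zero, sub_zero, zero_sub]
    exact neg_nonpos.2 (mul_pos hε ht.1).le

lemma exists_deriv_front_le (h : IsSolOn p s₀ φ T s u)
    (hφ : ∀ x ∈ Icc 0 s₀, φ x ≤ K * (s₀ - x)) : ∃ N, ∀ t ∈ Ioc 0 T, deriv s t ≤ N := by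
  have hT : (0 : ℝ) ∈ Icc 0 T := left_mem_Icc.2 h.T_pos.le
  have hs₀ : 0 < s₀ := h.init_s ▸ h.s_pos 0 hT
  obtain ⟨L, hL⟩ := h.exists_boundary_value_le
  refine ⟨max K (L / s₀), fun t ht => h.deriv_front_le ht fun x hx => ?_⟩
  have hφN : ∀ x ∈ Icc 0 s₀, φ x ≤ max K (L / s₀) * (s₀ - x) := fun x hx =>
    (hφ x hx).trans (mul_le_mul_of_nonneg_right (le_max_left _ _) (sub_nonneg.2 hx.2))
  have hLN : ∀ t ∈ Icc 0 T, u t 0 ≤ max K (L / s₀) * s₀ := fun t ht =>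
    (hL t ht).trans ((div_le_iff₀ hs₀).1 (le_max_right _ _))
  refine le_of_forall_pos_le_add fun δ hδ => ?_
  have hbarrier := h.le_mul_sub_front_add hφN hLN (div_pos hδ ht.1) (Ioc_subset_Icc_self ht)
    (Ioo_subset_Icc_self hx)
  rwa [div_mul_cancel₀ δ ht.1.ne'] at hbarrier

end SpeedBound

end IsSolOn

/-- Half the squared `L²` norm of `u(t)` on `(0, s(t))`, the functional of the concavity method. -/
def halfSqNorm (s : ℝ → ℝ) (u : ℝ → ℝ → ℝ) (t : ℝ) : ℝ :=
  ∫ x in (0 : ℝ)..s t, u t x ^ 2 / 2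

/-- The rate of change of `halfSqNorm s u` along a solution with exponent `p`. -/
def halfSqNormRate (p : ℝ) (s : ℝ → ℝ) (u : ℝ → ℝ → ℝ) (t : ℝ) : ℝ :=
  u t 0 ^ (p + 1) - ∫ x in (0 : ℝ)..s t, deriv (u t) x ^ 2

/-- Half the squared `L²` distance of `u(τ)` from `u(t)` on the interval `(0, s(t))` of the
earlier time `t`. -/
def halfSqDist (s : ℝ → ℝ) (u : ℝ → ℝ → ℝ) (t τ : ℝ) : ℝ :=
  ∫ x in (0 : ℝ)..s t, (u τ x - u t x) ^ 2 / 2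

/-- The rate of change in `τ` of `halfSqDist s u t τ` along a solution. -/
def halfSqDistRate (s : ℝ → ℝ) (u : ℝ → ℝ → ℝ) (t τ : ℝ) : ℝ :=
  halfSqRate (fun r x => u r x - u t x) (fun r x => deriv (u r) x - deriv (u t) x)
    (fun r x => deriv (u r) x) 0 (s t) τ

/-- The contribution of the strip `(s(t), s(τ))` swept by the free boundary to the energy
increment between the times `t` and `τ`: the Dirichlet energy of `u(τ)` there together with the
product `∂ₓu(τ, s(t)) u(τ, s(t))`, written as an integral over the strip. -/
def frontLayer (s : ℝ → ℝ) (u : ℝ → ℝ → ℝ) (t τ : ℝ) : ℝ :=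
  ∫ x in s t..s τ, (deriv (u τ) x ^ 2 / 2 - deriv (u τ) (s t) * deriv (u τ) x)

namespace IsSolOn

variable {p s₀ T t τ : ℝ} {φ s : ℝ → ℝ} {u : ℝ → ℝ → ℝ}

section FixedInterval

lemma conservationLawOn (h : IsSolOn p s₀ φ T s u) (ht : t ∈ Ioc 0 T) {w w' : ℝ → ℝ}
    (hw : ContinuousOn w (Icc 0 (s t))) (hw' : ContinuousOn w' (Icc 0 (s t)))
    (hderiv : ∀ x ∈ Ioo 0 (s t), HasDerivAt w (w' x) x) :
    ConservationLawOn (fun r x => u r x - w x) (fun r x => deriv (u r) x - w' x)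
      (fun r x => deriv (u r) x) (fun r x => deriv (deriv (u r)) x) t T 0 (s t) := by
  have hIoc : ∀ r ∈ Icc t T, r ∈ Ioc 0 T := fun r hr => ⟨ht.1.trans_le hr.1, hr.2⟩
  have hIoo : ∀ r ∈ Icc t T, ∀ x ∈ Ioo 0 (s t), x ∈ Ioo 0 (s r) := fun r hr x hx =>
    ⟨hx.1, hx.2.trans_le (h.front_le_front ht hr)⟩
  have hIcc : ∀ r ∈ Icc t T, ∀ x ∈ Icc 0 (s t), x ∈ Icc 0 (s r) := fun r hr x hx =>
    ⟨hx.1, hx.2.trans (h.front_le_front ht hr)⟩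
  have hV : ContinuousOn (fun q : ℝ × ℝ => deriv (u q.1) q.2) (Icc t T ×ˢ Icc 0 (s t)) :=
    h.ux_cont.mono fun q hq => ⟨hIoc q.1 hq.1, hIcc q.1 hq.1 q.2 hq.2⟩
  exact
    { continuousOn_Z := (h.u_cont.mono fun q hq =>
        ⟨Ioc_subset_Icc_self (hIoc q.1 hq.1), hIcc q.1 hq.1 q.2 hq.2⟩).sub
          (hw.comp continuousOn_snd fun q hq => hq.2)
      continuousOn_Y := hV.sub (hw'.comp continuousOn_snd fun q hq => hq.2)
      continuousOn_V := hV
      continuousOn_g := h.uxx_cont.mono fun q hq => ⟨hIoc q.1 hq.1, hIoo q.1 hq.1 q.2 hq.2⟩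
      hasDerivAt_Z := fun r hr x hx =>
        (h.hasDerivAt_slice (hIoc r hr) (hIoo r hr x hx)).sub (hderiv x hx)
      hasDerivAt_V := fun r hr x hx => h.hasDerivAt_deriv_slice (hIoc r hr) (hIoo r hr x hx)
      hasDerivAt_time := fun r hr x hx =>
        (h.hasDerivAt_time (hIoc r hr) (hIoo r hr x hx)).sub_const (w x) }

lemma conservationLawOn_sub_slice (h : IsSolOn p s₀ φ T s u) (ht : t ∈ Ioc 0 T) :
    ConservationLawOn (fun r x => u r x - u t x) (fun r x => deriv (u r) x - deriv (u t) x)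
      (fun r x => deriv (u r) x) (fun r x => deriv (deriv (u r)) x) t T 0 (s t) :=
  h.conservationLawOn ht (h.continuousOn_slice (Ioc_subset_Icc_self ht))
    (h.continuousOn_deriv_slice ht) fun _ hx => h.hasDerivAt_slice ht hx

lemma hasDerivWithinAt_halfSqDist (h : IsSolOn p s₀ φ T s u) (ht : t ∈ Ioc 0 T)
    (hτ : τ ∈ Ico t T) :
    HasDerivWithinAt (halfSqDist s u t) (halfSqDistRate s u t τ) (Ici τ) τ :=
  (h.conservationLawOn_sub_slice ht).hasDerivWithinAt_integral_sq_half
    (h.s_pos t (Ioc_subset_Icc_self ht)).le hτ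

lemma continuousOn_halfSqDist (h : IsSolOn p s₀ φ T s u) (ht : t ∈ Ioc 0 T) :
    ContinuousOn (halfSqDist s u t) (Icc t T) :=
  (h.conservationLawOn_sub_slice ht).continuousOn_integral_sq_half
    (h.s_pos t (Ioc_subset_Icc_self ht)).le

lemma halfSqDist_nonneg (h : IsSolOn p s₀ φ T s u) (ht : t ∈ Icc 0 T) : 0 ≤ halfSqDist s u t τ :=
  intervalIntegral.integral_nonneg (h.s_pos t ht).le fun _ _ => by positivity

lemma hasDerivWithinAt_integral_sq_half_fixed (hp : p + 1 ≠ 0) (h : IsSolOn p s₀ φ T s u)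
    (ht : t ∈ Ioo 0 T) :
    HasDerivWithinAt (fun τ => ∫ x in (0 : ℝ)..s t, u τ x ^ 2 / 2) (halfSqNormRate p s u t)
      (Ici t) t := by
  have ht' : t ∈ Ioc 0 T := Ioo_subset_Ioc_self ht
  have hderiv := (h.conservationLawOn ht' (w := 0) (w' := 0) continuousOn_const continuousOn_const
    fun x _ => hasDerivAt_const x 0).hasDerivWithinAt_integral_sq_half
      (h.s_pos t (Ioc_subset_Icc_self ht')).le ⟨le_rfl, ht.2⟩
  have hrate : halfSqRate (fun r x => u r x) (fun r x => deriv (u r) x)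
      (fun r x => deriv (u r) x) 0 (s t) t = halfSqNormRate p s u t := by
    rw [halfSqRate, halfSqNormRate, h.bc_free t ht', h.deriv_slice_zero ht',
      rpow_add_one' (h.boundary_value_nonneg (Ioc_subset_Icc_self ht')) hp]
    simp only [mul_zero, zero_sub, neg_mul, neg_neg, ← sq]
  simpa only [Pi.zero_apply, sub_zero, hrate] using hderiv

end FixedInterval

section MovingInterval

lemma continuousOn_halfSqNorm (h : IsSolOn p s₀ φ T s u) :
    ContinuousOn (halfSqNorm s u) (Icc 0 T) :=
  continuousOn_integral_zero_moving_endpoint h.s_cont (fun t ht => (h.s_pos t ht).le)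
    ((h.u_cont.pow 2).div_const 2)

lemma continuousOn_energy (hp : 0 ≤ p + 1) (h : IsSolOn p s₀ φ T s u) :
    ContinuousOn (energy p s u) (Ioc 0 T) := by
  have hdirichlet : ContinuousOn (fun t => ∫ x in (0 : ℝ)..s t, deriv (u t) x ^ 2) (Ioc 0 T) :=
    continuousOn_integral_zero_moving_endpoint (h.s_cont.mono Ioc_subset_Icc_self)
      (fun t ht => (h.s_pos t (Ioc_subset_Icc_self ht)).le) (h.ux_cont.pow 2)
  exact (hdirichlet.const_mul (1 / 2)).sub
    (((h.continuousOn_boundary_value.mono Ioc_subset_Icc_self).rpow_const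
      fun _ _ => Or.inr hp).div_const (p + 1))

lemma hasDerivWithinAt_integral_front (h : IsSolOn p s₀ φ T s u) (ht : t ∈ Ioo 0 T)
    {G : ℝ → ℝ → ℝ}
    (hG : ContinuousOn (Function.uncurry G) {q | q.1 ∈ Icc t T ∧ q.2 ∈ Icc (s t) (s q.1)}) :
    HasDerivWithinAt (fun τ => ∫ x in s t..s τ, G τ x) (deriv s t * G t (s t)) (Ici t) t := by
  have ht' : t ∈ Ioc 0 T := Ioo_subset_Ioc_self ht
  have hmem : t ∈ Icc t T := left_mem_Icc.2 ht.2.le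
  have huIcc : ∀ τ ∈ Icc t T, uIcc (s t) (s τ) = Icc (s t) (s τ) :=
    fun τ hτ => uIcc_of_le (h.front_le_front ht' hτ)
  refine HasDerivWithinAt.mono_of_mem_nhdsWithin (t := Icc t T)
    (hasDerivWithinAt_integral_moving_endpoint (h.s_diff t ht').hasDerivAt.hasDerivWithinAt
      ?_ fun τ hτ => ?_) (Icc_mem_nhdsGE ht.2)
  · refine (hG (t, s t) ⟨hmem, le_rfl, le_rfl⟩).mono ?_
    rintro q ⟨hq, hx⟩
    exact ⟨hq, huIcc q.1 hq ▸ hx⟩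
  · refine (hG.comp (f := fun x => (τ, x)) (by fun_prop) fun x hx => ⟨hτ, ?_⟩).intervalIntegrable
    exact huIcc τ hτ ▸ hx

lemma hasDerivWithinAt_halfSqNorm (hp : p + 1 ≠ 0) (h : IsSolOn p s₀ φ T s u)
    (ht : t ∈ Ioo 0 T) :
    HasDerivWithinAt (halfSqNorm s u) (halfSqNormRate p s u t) (Ici t) t := by
  have ht' : t ∈ Ioc 0 T := Ioo_subset_Ioc_self ht
  have hst : 0 < s t := h.s_pos t (Ioc_subset_Icc_self ht')
  have hu : ContinuousOn (fun q : ℝ × ℝ => u q.1 q.2)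
      {q | q.1 ∈ Icc t T ∧ q.2 ∈ Icc (s t) (s q.1)} := h.u_cont.mono fun q hq =>
    ⟨Icc_subset_Icc_left ht.1.le hq.1, Icc_subset_Icc_left hst.le hq.2⟩
  have hfront := h.hasDerivWithinAt_integral_front ht (G := fun τ x => u τ x ^ 2 / 2)
    (by simp only [Function.uncurry_def]; fun_prop)
  have hsum := (h.hasDerivWithinAt_integral_sq_half_fixed hp ht).add hfront
  rw [h.bc_free t ht'] at hsum
  refine (hsum.congr_deriv (by ring)).congr_of_eventuallyEq ?_ ?_
  · filter_upwards [Icc_mem_nhdsGE ht.2] with τ hτ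
    have hcont : ContinuousOn (fun x => u τ x ^ 2 / 2) (Icc 0 (s τ)) :=
      ((h.continuousOn_slice ⟨ht.1.le.trans hτ.1, hτ.2⟩).pow 2).div_const 2
    have hle := h.front_le_front ht' hτ
    exact (intervalIntegral.integral_add_adjacent_intervals
      ((hcont.mono (Icc_subset_Icc_right hle)).intervalIntegrable_of_Icc hst.le)
      ((hcont.mono (Icc_subset_Icc_left hst.le)).intervalIntegrable_of_Icc hle)).symm
  · simp only [Pi.add_apply, intervalIntegral.integral_same, add_zero, halfSqNorm]

lemma hasDerivWithinAt_frontLayer (h : IsSolOn p s₀ φ T s u) (ht : t ∈ Ioo 0 T) :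
    HasDerivWithinAt (frontLayer s u t) (-deriv s t ^ 3 / 2) (Ici t) t := by
  have hst : 0 < s t := h.s_pos t ⟨ht.1.le, ht.2.le⟩
  have hux : ContinuousOn (fun q : ℝ × ℝ => deriv (u q.1) q.2)
      {q | q.1 ∈ Icc t T ∧ q.2 ∈ Icc (s t) (s q.1)} := h.ux_cont.mono fun q hq =>
    ⟨⟨ht.1.trans_le hq.1.1, hq.1.2⟩, hst.le.trans hq.2.1, hq.2.2⟩
  have hux_old : ContinuousOn (fun q : ℝ × ℝ => deriv (u q.1) (s t))
      {q | q.1 ∈ Icc t T ∧ q.2 ∈ Icc (s t) (s q.1)} :=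
    h.ux_cont.comp (f := fun q : ℝ × ℝ => (q.1, s t)) (by fun_prop) fun q hq =>
      ⟨⟨ht.1.trans_le hq.1.1, hq.1.2⟩, hst.le, hq.2.1.trans hq.2.2⟩
  refine (h.hasDerivWithinAt_integral_front ht
    (G := fun τ x => deriv (u τ) x ^ 2 / 2 - deriv (u τ) (s t) * deriv (u τ) x)
    (by simp only [Function.uncurry_def]; fun_prop)).congr_deriv ?_
  rw [h.deriv_slice_front (Ioo_subset_Ioc_self ht)]
  ring

end MovingInterval

section EnergyIncrement

lemma frontLayer_eq (h : IsSolOn p s₀ φ T s u) (ht : t ∈ Ioc 0 T) (hτ : τ ∈ Icc t T) :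
    frontLayer s u t τ =
      (∫ x in s t..s τ, deriv (u τ) x ^ 2) / 2 + deriv (u τ) (s t) * u τ (s t) := by
  have hτ' : τ ∈ Ioc 0 T := ⟨ht.1.trans_le hτ.1, hτ.2⟩
  have hst : 0 < s t := h.s_pos t (Ioc_subset_Icc_self ht)
  have hle : s t ≤ s τ := h.front_le_front ht hτ
  have hV : ContinuousOn (deriv (u τ)) (Icc (s t) (s τ)) :=
    (h.continuousOn_deriv_slice hτ').mono (Icc_subset_Icc_left hst.le)
  have hftc : ∫ x in s t..s τ, deriv (u τ) x = -u τ (s t) := by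
    rw [intervalIntegral.integral_eq_sub_of_hasDerivAt_of_le hle
      ((h.continuousOn_slice (Ioc_subset_Icc_self hτ')).mono (Icc_subset_Icc_left hst.le))
      (fun x hx => h.hasDerivAt_slice hτ' ⟨hst.trans hx.1, hx.2⟩)
      (hV.intervalIntegrable_of_Icc hle), h.bc_free τ hτ', zero_sub]
  rw [frontLayer, intervalIntegral.integral_sub
      (ContinuousOn.intervalIntegrable_of_Icc hle (by fun_prop))
      (ContinuousOn.intervalIntegrable_of_Icc hle (by fun_prop)),
    intervalIntegral.integral_const_mul, intervalIntegral.integral_div, hftc]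
  ring

lemma energy_sub_energy_eq (h : IsSolOn p s₀ φ T s u) (ht : t ∈ Ioc 0 T) (hτ : τ ∈ Icc t T) :
    energy p s u τ - energy p s u t =
      frontLayer s u t τ - halfSqDistRate s u t τ
        - (∫ x in (0 : ℝ)..s t, (deriv (u τ) x - deriv (u t) x) ^ 2) / 2
        + (u τ 0 ^ p * (u τ 0 - u t 0) - (u τ 0 ^ (p + 1) - u t 0 ^ (p + 1)) / (p + 1)) := by
  have hτ' : τ ∈ Ioc 0 T := ⟨ht.1.trans_le hτ.1, hτ.2⟩
  have hst : 0 < s t := h.s_pos t (Ioc_subset_Icc_self ht)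
  have hle : s t ≤ s τ := h.front_le_front ht hτ
  have hVt : ContinuousOn (deriv (u t)) (Icc 0 (s t)) := h.continuousOn_deriv_slice ht
  have hVτ' : ContinuousOn (deriv (u τ)) (Icc 0 (s τ)) := h.continuousOn_deriv_slice hτ'
  have hVτ : ContinuousOn (deriv (u τ)) (Icc 0 (s t)) := hVτ'.mono (Icc_subset_Icc_right hle)
  have hint : ∀ {f : ℝ → ℝ}, ContinuousOn f (Icc 0 (s t)) → IntervalIntegrable f volume 0 (s t) :=
    fun hf => hf.intervalIntegrable_of_Icc hst.le
  have hstrip : (∫ x in (0 : ℝ)..s τ, deriv (u τ) x ^ 2) =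
      (∫ x in (0 : ℝ)..s t, deriv (u τ) x ^ 2) + ∫ x in s t..s τ, deriv (u τ) x ^ 2 :=
    (intervalIntegral.integral_add_adjacent_intervals (hint (hVτ.pow 2))
      (((hVτ'.mono (Icc_subset_Icc_left hst.le)).pow 2).intervalIntegrable_of_Icc hle)).symm
  have hsquare : (∫ x in (0 : ℝ)..s t, (deriv (u τ) x - deriv (u t) x) ^ 2) =
      2 * (∫ x in (0 : ℝ)..s t, deriv (u τ) x * (deriv (u τ) x - deriv (u t) x))
        - (∫ x in (0 : ℝ)..s t, deriv (u τ) x ^ 2) + ∫ x in (0 : ℝ)..s t, deriv (u t) x ^ 2 := by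
    rw [← intervalIntegral.integral_const_mul,
      ← intervalIntegral.integral_sub (hint (by fun_prop)) (hint (by fun_prop)),
      ← intervalIntegral.integral_add (hint (by fun_prop)) (hint (by fun_prop))]
    congr 1 with x
    ring
  rw [h.frontLayer_eq ht hτ, energy, energy, halfSqDistRate, halfSqRate, hstrip, hsquare,
    h.bc_free t ht, h.deriv_slice_zero hτ']
  ring

lemma exists_energy_sub_energy_le (hp : 1 ≤ p) (h : IsSolOn p s₀ φ T s u) (ht : t ∈ Ioc 0 T) :
    ∃ C, ∀ τ ∈ Icc t T, energy p s u τ - energy p s u t ≤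
      frontLayer s u t τ - halfSqDistRate s u t τ + C * halfSqDist s u t τ := by
  obtain ⟨L, hL⟩ := h.exists_boundary_value_le
  have hmem : ∀ {r}, r ∈ Ioc 0 T → u r 0 ∈ Icc 0 L := fun hr =>
    ⟨h.boundary_value_nonneg (Ioc_subset_Icc_self hr), hL _ (Ioc_subset_Icc_self hr)⟩
  have hL₀ : 0 ≤ L := (hmem ht).1.trans (hmem ht).2
  set B : ℝ := p * L ^ (p - 1) + 1
  have hB₀ : 0 < B := by positivity
  refine ⟨2 * B * (1 / (s t - 0) + 1 / (1 / (2 * B))), fun τ hτ => ?_⟩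
  have hτ' : τ ∈ Ioc 0 T := ⟨ht.1.trans_le hτ.1, hτ.2⟩
  have hst : 0 < s t := h.s_pos t (Ioc_subset_Icc_self ht)
  have hle : s t ≤ s τ := h.front_le_front ht hτ
  have htrace := sq_left_endpoint_le_integral_sq_deriv_add_integral_sq hst
    (l := 1 / (2 * B)) (by positivity)
    (((h.continuousOn_slice (Ioc_subset_Icc_self hτ')).mono (Icc_subset_Icc_right hle)).sub
      (h.continuousOn_slice (Ioc_subset_Icc_self ht)))
    (((h.continuousOn_deriv_slice hτ').mono (Icc_subset_Icc_right hle)).sub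
      (h.continuousOn_deriv_slice ht))
    fun x hx => (h.hasDerivAt_slice hτ' ⟨hx.1, hx.2.trans_le hle⟩).sub (h.hasDerivAt_slice ht hx)
  have hboundary : u τ 0 ^ p * (u τ 0 - u t 0) - (u τ 0 ^ (p + 1) - u t 0 ^ (p + 1)) / (p + 1) ≤
      (∫ x in (0 : ℝ)..s t, (deriv (u τ) x - deriv (u t) x) ^ 2) / 2
        + 2 * B * (1 / (s t - 0) + 1 / (1 / (2 * B))) * halfSqDist s u t τ :=
    calc _ ≤ p * L ^ (p - 1) * (u τ 0 - u t 0) ^ 2 := rpow_mul_sub_sub_le hp (hmem hτ') (hmem ht)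
      _ ≤ B * (u τ 0 - u t 0) ^ 2 := by gcongr; exact (lt_add_one _).le
      _ ≤ _ := mul_le_mul_of_nonneg_left htrace hB₀.le
      _ = _ := by
        rw [halfSqDist, intervalIntegral.integral_div]
        simp only [Pi.sub_apply]
        field_simp
  rw [h.energy_sub_energy_eq ht hτ]
  linarith

end EnergyIncrement

section EnergyDissipation

variable {k r a b : ℝ}

/- If the slopes stayed above `r`, the bound on the energy increment would become a differential
inequality forcing `halfSqDist s u t τ` below `k * (τ - t) ^ 2`. -/
lemma frequently_slope_energy_lt (hp : 1 ≤ p) (h : IsSolOn p s₀ φ T s u) (ht : t ∈ Ioo 0 T)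
    (hk : ∀ᶠ τ in 𝓝[>] t, k * (τ - t) ^ 2 ≤ halfSqDist s u t τ)
    (hr : -deriv s t ^ 3 / 2 - 2 * k < r) :
    ∃ᶠ τ in 𝓝[>] t, slope (energy p s u) t τ < r := by
  have ht' : t ∈ Ioc 0 T := Ioo_subset_Ioc_self ht
  by_contra! hslope
  obtain ⟨c, hsc, hcr⟩ := exists_between (sub_lt_iff_lt_add.1 hr)
  obtain ⟨C, hC⟩ := h.exists_energy_sub_energy_le hp ht'
  have hlayer : ∀ᶠ τ in 𝓝[>] t, slope (frontLayer s u t) t τ < c :=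
    ((hasDerivWithinAt_iff_tendsto_slope' self_notMem_Ioi).1
      (hasDerivWithinAt_Ioi_iff_Ici.2 (h.hasDerivWithinAt_frontLayer ht))).eventually_lt_const hsc
  have hrate : ∀ᶠ τ in 𝓝[>] t,
      halfSqDistRate s u t τ ≤ (c - r) * (τ - t) + C * halfSqDist s u t τ := by
    filter_upwards [hslope, hlayer, Ioc_mem_nhdsGT ht.2] with τ hE hl hτ
    have hpos : 0 < τ - t := sub_pos.2 hτ.1
    rw [slope_def_field, le_div_iff₀ hpos] at hE
    rw [slope_def_field, div_lt_iff₀ hpos, show frontLayer s u t t = 0 by simp [frontLayer],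
      sub_zero] at hl
    linarith [hC τ (Ioc_subset_Icc_self hτ)]
  have hlt := eventually_lt_mul_sq_of_rightDeriv_le ht.2 (h.continuousOn_halfSqDist ht')
    (fun τ hτ => h.hasDerivWithinAt_halfSqDist ht' hτ) (by simp [halfSqDist])
    (by simp [halfSqDistRate, halfSqRate]) hrate (sub_lt_iff_lt_add'.2 hcr : c - r < 2 * k)
  obtain ⟨τ, hτ, hτ'⟩ := (hlt.and hk).exists
  exact hτ.not_ge hτ'

lemma eventually_mul_sq_le_halfSqDist (hp : p + 1 ≠ 0) (h : IsSolOn p s₀ φ T s u)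
    (ht : t ∈ Ioo 0 T) (hM : 0 < halfSqNorm s u t) (hM' : 0 < halfSqNormRate p s u t)
    (hk : k < halfSqNormRate p s u t ^ 2 / (4 * halfSqNorm s u t)) :
    ∀ᶠ τ in 𝓝[>] t, k * (τ - t) ^ 2 ≤ halfSqDist s u t τ := by
  have ht' : t ∈ Ioc 0 T := Ioo_subset_Ioc_self ht
  refine eventually_mul_sq_le_of_hasDerivWithinAt
    ((h.hasDerivWithinAt_integral_sq_half_fixed hp ht).sub_const (halfSqNorm s u t))
    (sub_self _) hM' hM ?_ hk
  filter_upwards [Ioc_mem_nhdsGT ht.2] with τ hτ q hq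
  have hτ' : τ ∈ Icc 0 T := ⟨(ht.1.trans hτ.1).le, hτ.2⟩
  exact integral_sq_half_sub_le (h.s_pos t (Ioc_subset_Icc_self ht')).le hq
    ((h.continuousOn_slice hτ').mono
      (Icc_subset_Icc_right (h.front_le_front ht' (Ioc_subset_Icc_self hτ))))
    (h.continuousOn_slice (Ioc_subset_Icc_self ht'))

lemma energy_le_sub_integral_deriv_front_cube (hp : 1 ≤ p) (h : IsSolOn p s₀ φ T s u)
    (ha : 0 < a) (hab : a ≤ b) (hb : b ≤ T) :
    energy p s u b ≤ energy p s u a - (∫ t in a..b, deriv s t ^ 3) / 2 := by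
  have hsub : Icc a b ⊆ Ioc 0 T := fun t ht => ⟨ha.trans_le ht.1, ht.2.trans hb⟩
  have hs' : ContinuousOn (fun t => deriv s t ^ 3) (Icc a b) := (h.s_deriv_cont.mono hsub).pow 3
  refine image_le_of_liminf_slope_right_le_deriv_boundary
    (B := fun r => energy p s u a - (∫ t in a..r, deriv s t ^ 3) / 2)
    (B' := fun t => -deriv s t ^ 3 / 2)
    ((h.continuousOn_energy (by linarith)).mono hsub) (by simp) ?_ ?_ ?_ ⟨hab, le_rfl⟩
  · exact continuousOn_const.sub ((intervalIntegral.continuousOn_primitive_interval'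
      (hs'.intervalIntegrable_of_Icc hab) left_mem_uIcc).mono Icc_subset_uIcc |>.div_const 2)
  · intro t ht
    simpa only [neg_div] using
      ((hasDerivWithinAt_integral_Ici hs' ht).div_const 2).const_sub (energy p s u a)
  · intro t ht r hr
    refine h.frequently_slope_energy_lt (k := 0) hp ⟨ha.trans_le ht.1, ht.2.trans_le hb⟩ ?_
      (by simpa using hr)
    exact Eventually.of_forall fun τ => by
      simpa using h.halfSqDist_nonneg (Ioc_subset_Icc_self (hsub (Ico_subset_Icc_self ht)))

lemma antitoneOn_energy (hp : 1 ≤ p) (h : IsSolOn p s₀ φ T s u) :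
    AntitoneOn (energy p s u) (Ioc 0 T) := by
  intro a ha b hb hab
  have hint : 0 ≤ ∫ t in a..b, deriv s t ^ 3 := intervalIntegral.integral_nonneg hab
    fun t ht => pow_nonneg (h.deriv_front_nonneg ⟨ha.1.trans_le ht.1, ht.2.trans hb.2⟩) 3
  linarith [h.energy_le_sub_integral_deriv_front_cube hp ha.1 hab hb.2]

end EnergyDissipation

section NegativeEnergy

variable {q t₀ : ℝ}

lemma mul_neg_energy_le_halfSqNormRate (hp : 1 ≤ p) (h : IsSolOn p s₀ φ T s u)
    (ht : t ∈ Ioc 0 T) : (p + 1) * -energy p s u t ≤ halfSqNormRate p s u t := by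
  have hdirichlet : 0 ≤ ∫ x in (0 : ℝ)..s t, deriv (u t) x ^ 2 :=
    intervalIntegral.integral_nonneg (h.s_pos t (Ioc_subset_Icc_self ht)).le fun _ _ => sq_nonneg _
  calc (p + 1) * -energy p s u t
      = u t 0 ^ (p + 1) - (p + 1) / 2 * ∫ x in (0 : ℝ)..s t, deriv (u t) x ^ 2 := by
        rw [energy]
        have : p + 1 ≠ 0 := by linarith
        field_simp
        ring
    _ ≤ halfSqNormRate p s u t := by
        rw [halfSqNormRate]
        nlinarith

lemma halfSqNormRate_pos_of_energy_neg (hp : 1 ≤ p) (h : IsSolOn p s₀ φ T s u)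
    (ht : t ∈ Ioc 0 T) (hE : energy p s u t < 0) : 0 < halfSqNormRate p s u t :=
  (mul_pos (by linarith) (neg_pos.2 hE)).trans_le (h.mul_neg_energy_le_halfSqNormRate hp ht)

lemma halfSqNorm_pos_of_energy_neg (hp : p + 1 ≠ 0) (h : IsSolOn p s₀ φ T s u)
    (ht : t ∈ Icc 0 T) (hE : energy p s u t < 0) : 0 < halfSqNorm s u t := by
  have hst : 0 < s t := h.s_pos t ht
  have hu₀ : u t 0 ≠ 0 := by
    intro hu₀
    have hdirichlet : 0 ≤ ∫ x in (0 : ℝ)..s t, deriv (u t) x ^ 2 :=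
      intervalIntegral.integral_nonneg hst.le fun _ _ => sq_nonneg _
    rw [energy, hu₀, zero_rpow hp, zero_div] at hE
    linarith
  have hu : ContinuousOn (u t) (Icc 0 (s t)) := h.continuousOn_slice ht
  exact intervalIntegral.integral_pos hst (by fun_prop) (fun x _ => by positivity)
    ⟨0, ⟨le_rfl, hst.le⟩, by positivity⟩

lemma frequently_slope_energy_lt_of_energy_neg {r : ℝ} (hp : 1 ≤ p) (h : IsSolOn p s₀ φ T s u)
    (ht : t ∈ Ioo 0 T) (hE : energy p s u t < 0)
    (hr : -(halfSqNormRate p s u t ^ 2 / (2 * halfSqNorm s u t)) < r) :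
    ∃ᶠ τ in 𝓝[>] t, slope (energy p s u) t τ < r := by
  have ht' : t ∈ Ioc 0 T := Ioo_subset_Ioc_self ht
  have hp' : p + 1 ≠ 0 := by linarith
  obtain ⟨k, hrk, hk⟩ : ∃ k, -r / 2 < k ∧
      k < halfSqNormRate p s u t ^ 2 / (4 * halfSqNorm s u t) := by
    refine exists_between ?_
    rw [show (4 : ℝ) * halfSqNorm s u t = 2 * halfSqNorm s u t * 2 by ring, ← div_div]
    linarith
  refine h.frequently_slope_energy_lt hp ht (h.eventually_mul_sq_le_halfSqDist hp' ht
    (h.halfSqNorm_pos_of_energy_neg hp' (Ioc_subset_Icc_self ht') hE)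
    (h.halfSqNormRate_pos_of_energy_neg hp ht' hE) hk) ?_
  linarith [pow_nonneg (h.deriv_front_nonneg ht') 3]

lemma energy_le_mul_rpow_of_energy_neg (hq : 1 ≤ q) (hqp : 2 * q < p + 1)
    (h : IsSolOn p s₀ φ T s u) (ht₀ : 0 < t₀) (hE : energy p s u t₀ < 0) (ht : t ∈ Icc t₀ T) :
    energy p s u t ≤ energy p s u t₀ * (halfSqNorm s u t / halfSqNorm s u t₀) ^ q := by
  have hp : 1 ≤ p := by linarith
  have hp' : p + 1 ≠ 0 := by linarith
  have hsub : Icc t₀ T ⊆ Ioc 0 T := fun r hr => ⟨ht₀.trans_le hr.1, hr.2⟩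
  have ht₀T : t₀ ∈ Icc t₀ T := ⟨le_rfl, ht.1.trans ht.2⟩
  have hneg : ∀ r ∈ Icc t₀ T, energy p s u r < 0 := fun r hr =>
    (h.antitoneOn_energy hp (hsub ht₀T) (hsub hr) hr.1).trans_lt hE
  have hM : ∀ r ∈ Icc t₀ T, 0 < halfSqNorm s u r := fun r hr =>
    h.halfSqNorm_pos_of_energy_neg hp' (Ioc_subset_Icc_self (hsub hr)) (hneg r hr)
  refine image_le_of_liminf_slope_right_lt_deriv_boundary' (f := energy p s u)
    (B := fun r => energy p s u t₀ * (halfSqNorm s u r / halfSqNorm s u t₀) ^ q)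
    ((h.continuousOn_energy (by linarith)).mono hsub)
    (fun r hr ρ hρ => h.frequently_slope_energy_lt_of_energy_neg hp
      ⟨ht₀.trans_le hr.1, hr.2⟩ (hneg r (Ico_subset_Icc_self hr)) hρ)
    (by rw [div_self (hM t₀ ht₀T).ne', one_rpow, mul_one])
    ((((h.continuousOn_halfSqNorm.mono (hsub.trans Ioc_subset_Icc_self)).div_const _).rpow_const
      fun _ _ => Or.inr (by linarith)).const_mul _)
    (fun r hr => (((h.hasDerivWithinAt_halfSqNorm hp' ⟨ht₀.trans_le hr.1, hr.2⟩).div_const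
      _).rpow_const (Or.inr hq)).const_mul _) ?_ ht
  intro r hr hEr
  have hr' : r ∈ Icc t₀ T := Ico_subset_Icc_self hr
  have hMr : 0 < halfSqNorm s u r := hM r hr'
  have hM₀ : 0 < halfSqNorm s u t₀ := hM t₀ ht₀T
  have hM' : 0 < halfSqNormRate p s u r :=
    h.halfSqNormRate_pos_of_energy_neg hp (hsub hr') (hneg r hr')
  have hrate : -halfSqNormRate p s u r / 2 < q * energy p s u r := by
    nlinarith [h.mul_neg_energy_le_halfSqNormRate hp (hsub hr'), hneg r hr']
  calc -(halfSqNormRate p s u r ^ 2 / (2 * halfSqNorm s u r))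
      = -halfSqNormRate p s u r / 2 * halfSqNormRate p s u r / halfSqNorm s u r := by field_simp
    _ < q * energy p s u r * halfSqNormRate p s u r / halfSqNorm s u r := by gcongr
    _ = _ := by
      rw [hEr, rpow_sub_one (by positivity)]
      field_simp

lemma mul_sub_lt_rpow_of_energy_neg (hq : 1 ≤ q) (hqp : 2 * q < p + 1)
    (h : IsSolOn p s₀ φ T s u) (ht₀ : t₀ ∈ Ioc 0 T) (hE : energy p s u t₀ < 0) :
    (q - 1) * ((p + 1) * -energy p s u t₀ / halfSqNorm s u t₀ ^ q) * (T - t₀) <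
      halfSqNorm s u t₀ ^ (1 - q) := by
  have hp : 1 ≤ p := by linarith
  have hp' : p + 1 ≠ 0 := by linarith
  have hsub : Icc t₀ T ⊆ Ioc 0 T := fun r hr => ⟨ht₀.1.trans_le hr.1, hr.2⟩
  have hM : ∀ t ∈ Icc t₀ T, 0 < halfSqNorm s u t := fun t ht =>
    h.halfSqNorm_pos_of_energy_neg hp' (Ioc_subset_Icc_self (hsub ht))
      ((h.antitoneOn_energy hp ht₀ (hsub ht) ht.1).trans_lt hE)
  refine mul_sub_lt_rpow_of_mul_rpow_le_rightDeriv ht₀.2 hq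
    (h.continuousOn_halfSqNorm.mono (hsub.trans Ioc_subset_Icc_self))
    (fun t ht => h.hasDerivWithinAt_halfSqNorm hp' ⟨ht₀.1.trans_le ht.1, ht.2⟩) hM fun t ht => ?_
  have ht' : t ∈ Icc t₀ T := Ico_subset_Icc_self ht
  calc (p + 1) * -energy p s u t₀ / halfSqNorm s u t₀ ^ q * halfSqNorm s u t ^ q
      = (p + 1) * -(energy p s u t₀ * (halfSqNorm s u t / halfSqNorm s u t₀) ^ q) := by
        rw [div_rpow (hM t ht').le (hM t₀ ⟨le_rfl, ht₀.2⟩).le]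
        ring
    _ ≤ (p + 1) * -energy p s u t := by
        gcongr
        exact h.energy_le_mul_rpow_of_energy_neg hq hqp ht₀.1 hE ht'
    _ ≤ halfSqNormRate p s u t := h.mul_neg_energy_le_halfSqNormRate hp (hsub ht')

end NegativeEnergy

end IsSolOn

namespace IsGlobalSol

variable {p s₀ t : ℝ} {φ s : ℝ → ℝ} {u : ℝ → ℝ → ℝ}

lemma energy_nonneg (hp : 1 < p) (h : IsGlobalSol p s₀ φ s u) (ht : 0 < t) :
    0 ≤ energy p s u t := by
  by_contra! hE
  -- any exponent with `1 < q < (p + 1) / 2` would do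
  set q : ℝ := (p + 3) / 4 with hq
  set c : ℝ := (q - 1) * ((p + 1) * -energy p s u t / halfSqNorm s u t ^ q) with hc
  have hM : 0 < halfSqNorm s u t :=
    (h t ht).halfSqNorm_pos_of_energy_neg (by linarith) ⟨ht.le, le_rfl⟩ hE
  have hc₀ : 0 < c := mul_pos (by linarith)
    (div_pos (mul_pos (by linarith) (neg_pos.2 hE)) (rpow_pos_of_pos hM q))
  set T : ℝ := t + halfSqNorm s u t ^ (1 - q) / c with hT
  have htT : t < T := lt_add_of_pos_right t (by positivity)
  have hlifespan := (h T (ht.trans htT)).mul_sub_lt_rpow_of_energy_neg (q := q)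
    (by linarith) (by linarith) ⟨ht, htT.le⟩ hE
  rw [← hc, hT, add_sub_cancel_left, mul_div_cancel₀ _ hc₀.ne'] at hlifespan
  exact hlifespan.false

lemma deriv_front_nonneg (h : IsGlobalSol p s₀ φ s u) (ht : 0 < t) : 0 ≤ deriv s t :=
  (h t ht).deriv_front_nonneg ⟨ht, le_rfl⟩

lemma integrableOn_deriv_front_cube (hp : 1 < p) (h : IsGlobalSol p s₀ φ s u) (ht : 0 < t) :
    IntegrableOn (fun r => deriv s r ^ 3) (Ioi t) := by
  have hs' : ∀ T, ContinuousOn (fun r => deriv s r ^ 3) (Icc t T) := fun T r hr =>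
    (((h T (ht.trans_le (hr.1.trans hr.2))).s_deriv_cont.mono
      fun x hx => ⟨ht.trans_le hx.1, hx.2⟩).pow 3) r hr
  refine integrableOn_Ioi_of_intervalIntegral_norm_bounded (2 * energy p s u t) t
    (fun T => (hs' T).integrableOn_Icc.mono_set Ioc_subset_Icc_self) tendsto_id ?_
  filter_upwards [eventually_ge_atTop t] with T hT
  have hnorm : ∫ r in t..T, ‖deriv s r ^ 3‖ = ∫ r in t..T, deriv s r ^ 3 := by
    refine intervalIntegral.integral_congr fun r hr => norm_of_nonneg ?_
    rw [uIcc_of_le hT] at hr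
    exact pow_nonneg (h.deriv_front_nonneg (ht.trans_le hr.1)) 3
  have hT₀ : 0 < T := ht.trans_le hT
  rw [hnorm]
  linarith [(h T hT₀).energy_le_sub_integral_deriv_front_cube hp.le ht hT le_rfl,
    h.energy_nonneg hp hT₀]

lemma setLIntegral_Ioc_deriv_front_cube_lt_top {K : ℝ} (h : IsGlobalSol p s₀ φ s u)
    (hφ : ∀ x ∈ Icc 0 s₀, φ x ≤ K * (s₀ - x)) (ht : 0 < t) :
    ∫⁻ r in Ioc 0 t, ENNReal.ofReal (deriv s r ^ 3) < ⊤ := by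
  obtain ⟨N, hN⟩ := (h t ht).exists_deriv_front_le hφ
  calc ∫⁻ r in Ioc 0 t, ENNReal.ofReal (deriv s r ^ 3)
      ≤ ∫⁻ _ in Ioc 0 t, ENNReal.ofReal (N ^ 3) :=
        setLIntegral_mono measurable_const fun r hr => ENNReal.ofReal_le_ofReal
          (pow_le_pow_left₀ (h.deriv_front_nonneg hr.1) (hN r hr) 3)
    _ < ⊤ := by
        rw [setLIntegral_const, Real.volume_Ioc]
        exact ENNReal.mul_lt_top ENNReal.ofReal_lt_top ENNReal.ofReal_lt_top

end IsGlobalSol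

lemma exists_le_mul_sub_of_memW {s₀ : ℝ} {φ : ℝ → ℝ} (hW : memW s₀ φ) :
    ∃ K : ℝ, ∀ x ∈ Icc 0 s₀, φ x ≤ K * (s₀ - x) := by
  obtain ⟨hs₀, ⟨K, hK⟩, -, -, hφ₀⟩ := hW
  refine ⟨K, fun x hx => ?_⟩
  calc φ x ≤ dist (φ s₀) (φ x) := by
        rw [hφ₀, Real.dist_eq, zero_sub, abs_neg]
        exact le_abs_self _
    _ ≤ K * dist s₀ x := hK.dist_le_mul s₀ (right_mem_Icc.2 hs₀.le) x hx
    _ = K * (s₀ - x) := by rw [Real.dist_eq, abs_of_nonneg (sub_nonneg.2 hx.2)]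

theorem stmt_13_general {p s₀ K : ℝ} {φ s : ℝ → ℝ} {u : ℝ → ℝ → ℝ} (hp : 1 < p)
    (hφ : ∀ x ∈ Icc 0 s₀, φ x ≤ K * (s₀ - x)) (hsol : IsGlobalSol p s₀ φ s u) :
    (∀ t : ℝ, 0 < t → 0 ≤ energy p s u t) ∧
    (∫⁻ t in Ioi (0 : ℝ), ENNReal.ofReal (deriv s t ^ 3)) < ⊤ := by
  refine ⟨fun t ht => hsol.energy_nonneg hp ht, ?_⟩
  rw [← Ioc_union_Ioi_eq_Ioi (zero_le_one (α := ℝ))]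
  exact (lintegral_union_le _ _ _).trans_lt (ENNReal.add_lt_top.2
    ⟨hsol.setLIntegral_Ioc_deriv_front_cube_lt_top hφ one_pos,
      (hsol.integrableOn_deriv_front_cube hp one_pos).lintegral_lt_top⟩)

/-- Proposition 3.2: nonnegative energy and finiteness of `∫₀^∞ s'(t)³ dt`
for global-in-time solutions. -/
theorem stmt_13 (p : ℝ) (hp : 1 < p) (s₀ : ℝ) (φ : ℝ → ℝ) (hW : memW s₀ φ)
    (s : ℝ → ℝ) (u : ℝ → ℝ → ℝ) (hsol : IsGlobalSol p s₀ φ s u) :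
    (∀ t : ℝ, 0 < t → 0 ≤ energy p s u t) ∧
    (∫⁻ t in Ioi (0:ℝ), ENNReal.ofReal ((deriv s t) ^ 3)) < ⊤ := by
  obtain ⟨K, hK⟩ := exists_le_mul_sub_of_memW hW
  exact stmt_13_general hp hK hsol
end
end
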